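/- arXiv:2410.07098 — 2 statements merged into one kernel-verified Lean document; each statement's English description precedes it below -/
import Mathlib

section
/- For every integer k ≥ 3 and every ε > 0 there exists c > 0 such that the following holds for all sufficiently large n. Let r = (k² − k + 2)/2. If G is an ordered graph on n vertices containing no induced monotone path P_{2k}, and the complement Ḡ of G contains at least ε·n^r copies of K_r, then Ḡ contains the complete bipartite graph K_2[t] with t = ⌈c·n/log n⌉. -/
/-- The number of `r`-element vertex subsets of `G` inducing a complete subgraph
(copies of `K_r`). -/
noncomputable def cliqueCount {V : Type*} [Fintype V] (G : SimpleGraph V) (r : ℕ) : ℕ :=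
  Set.ncard {s : Finset V | s.card = r ∧ G.IsClique (s : Set V)}

/-- `G` contains `K_r[t]`: `r` pairwise disjoint vertex sets of size `t` with all
pairs of vertices from distinct sets adjacent. -/
def ContainsBlowup {V : Type*} (G : SimpleGraph V) (r t : ℕ) : Prop :=
  ∃ A : Fin r → Finset V,
    (∀ i, (A i).card = t) ∧
    (∀ i j, i ≠ j → Disjoint (A i) (A j)) ∧
    (∀ i j, i ≠ j → ∀ x ∈ A i, ∀ y ∈ A j, G.Adj x y)

/-- The ordered graph `G` on `Fin n` contains an induced monotone path with `m`
vertices: `v 0 < v 1 < ⋯ < v (m-1)` with adjacency exactly between consecutive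
vertices. -/
def HasIndMonPath {n : ℕ} (G : SimpleGraph (Fin n)) (m : ℕ) : Prop :=
  ∃ v : Fin m → Fin n, StrictMono v ∧
    ∀ i j : Fin m, G.Adj (v i) (v j) ↔ ((i : ℕ) + 1 = (j : ℕ) ∨ (j : ℕ) + 1 = (i : ℕ))

open scoped Classical in
/-- The neighbours of `a` inside `S`. -/
noncomputable def nbrsIn {V : Type*} (G : SimpleGraph V) (a : V) (S : Finset V) : Finset V :=
  S.filter fun x => G.Adj a x

open scoped Classical in
/-- The non-neighbours of `a` inside `S`. -/
noncomputable def nonNbrsIn {V : Type*} (G : SimpleGraph V) (a : V) (S : Finset V) : Finset V :=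
  S.filter fun x => ¬ G.Adj a x

/-- Every element of `A` precedes every element of `B`. -/
def Before {V : Type*} [LT V] (A B : Finset V) : Prop :=
  ∀ a ∈ A, ∀ b ∈ B, a < b

/-- No two sets of size at least `t`, one before the other, are without edges between them. -/
def NoHole {V : Type*} [LT V] (G : SimpleGraph V) (t : ℕ) : Prop :=
  ∀ A B : Finset V, t ≤ A.card → t ≤ B.card → Before A B → ∃ a ∈ A, ∃ b ∈ B, G.Adj a b

/-- A step along an increasing edge ending in `Z`. -/
def MonStep {V : Type*} [LT V] (G : SimpleGraph V) (Z : Finset V) (u w : V) : Prop :=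
  u < w ∧ G.Adj u w ∧ w ∈ Z

/-- `w` is the end of an increasing path from `v` whose vertices after `v` lie in `Z`. -/
def Reach {V : Type*} [LT V] (G : SimpleGraph V) (Z : Finset V) : V → V → Prop :=
  Relation.ReflTransGen (MonStep G Z)

open scoped Classical in
/-- The vertices of `Z` reachable from `v` by increasing paths in `Z`. -/
noncomputable def reachSet {V : Type*} [LT V] (G : SimpleGraph V) (Z : Finset V) (v : V) :
    Finset V :=
  Z.filter fun w => Reach G Z v w

/-- Every large set followed by a large set contains a vertex reaching many later vertices. -/
def Launches {V : Type*} [LT V] (G : SimpleGraph V) (t K : ℕ) : Prop :=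
  ∀ X Z : Finset V, t ≤ X.card → K ≤ Z.card → Before X Z →
    ∃ v ∈ X, t ≤ (reachSet G Z v).card

/-- A list of vertices tracing an induced increasing path. -/
def IndPath {V : Type*} [LT V] (G : SimpleGraph V) : List V → Prop
  | [] => True
  | [_] => True
  | a :: b :: l => a < b ∧ G.Adj a b ∧ (∀ x ∈ l, ¬ G.Adj a x) ∧ IndPath G (b :: l)

section Basic

variable {V : Type*} {G : SimpleGraph V}

lemma mem_nbrsIn {a x : V} {S : Finset V} : x ∈ nbrsIn G a S ↔ x ∈ S ∧ G.Adj a x := by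
  simp [nbrsIn]

lemma mem_nonNbrsIn {a x : V} {S : Finset V} : x ∈ nonNbrsIn G a S ↔ x ∈ S ∧ ¬ G.Adj a x := by
  simp [nonNbrsIn]

lemma nbrsIn_subset (a : V) (S : Finset V) : nbrsIn G a S ⊆ S :=
  fun _ hx => (mem_nbrsIn.1 hx).1

lemma nonNbrsIn_subset (a : V) (S : Finset V) : nonNbrsIn G a S ⊆ S :=
  fun _ hx => (mem_nonNbrsIn.1 hx).1

lemma nbrsIn_mono (a : V) {S T : Finset V} (h : S ⊆ T) : nbrsIn G a S ⊆ nbrsIn G a T :=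
  fun _ hx => mem_nbrsIn.2 ⟨h (mem_nbrsIn.1 hx).1, (mem_nbrsIn.1 hx).2⟩

lemma card_nbrsIn_add_card_nonNbrsIn (a : V) (S : Finset V) :
    (nbrsIn G a S).card + (nonNbrsIn G a S).card = S.card := by
  classical
  simpa [nbrsIn, nonNbrsIn] using Finset.card_filter_add_card_filter_not (s := S) (G.Adj a)

end Basic

section Reachability

variable {V : Type*} [LinearOrder V] {G : SimpleGraph V} {t K : ℕ}

lemma mem_reachSet {Z : Finset V} {v w : V} : w ∈ reachSet G Z v ↔ w ∈ Z ∧ Reach G Z v w := by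
  simp [reachSet]

lemma Before.mono {A B A' B' : Finset V} (h : Before A B) (hA : A' ⊆ A) (hB : B' ⊆ B) :
    Before A' B' :=
  fun a ha b hb => h a (hA ha) b (hB hb)

lemma exists_initial_segment (E : Finset V) {a : ℕ} (ha : a ≤ E.card) :
    ∃ E₁ ⊆ E, E₁.card = a ∧ Before E₁ (E \ E₁) := by
  induction a with
  | zero => exact ⟨∅, by simp, by simp, by simp [Before]⟩
  | succ a ih =>
    obtain ⟨E₁, hE, hc, hb⟩ := ih (by omega)
    have hne : (E \ E₁).Nonempty := by
      rw [← Finset.card_pos, Finset.card_sdiff_of_subset hE]; omega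
    have hm := Finset.min'_mem _ hne
    rw [Finset.mem_sdiff] at hm
    refine ⟨insert ((E \ E₁).min' hne) E₁, ?_, ?_, ?_⟩
    · exact Finset.insert_subset hm.1 hE
    · rw [Finset.card_insert_of_notMem hm.2, hc]
    · intro x hx y hy
      rw [Finset.mem_sdiff, Finset.mem_insert, not_or] at hy
      have hy' : y ∈ E \ E₁ := Finset.mem_sdiff.2 ⟨hy.1, hy.2.2⟩
      rcases Finset.mem_insert.1 hx with rfl | hx
      · exact lt_of_le_of_ne (Finset.min'_le _ _ hy') (Ne.symm hy.2.1)
      · exact hb x hx y hy'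

lemma NoHole.pos (h : NoHole G t) : 0 < t := by
  rcases Nat.eq_zero_or_pos t with rfl | h0
  · obtain ⟨a, ha, _⟩ := h ∅ ∅ (by simp) (by simp) (by simp [Before])
    simp at ha
  · exact h0

lemma NoHole.card_unreached_lt (h : NoHole G t) {D E : Finset V} (hD : t ≤ D.card)
    (hDE : Before D E) {U : Finset V} (hU : U ⊆ E) (hno : ∀ d ∈ D, ∀ u ∈ U, ¬ G.Adj d u) :
    U.card < t := by
  by_contra! hc
  obtain ⟨a, ha, b, hb, hab⟩ := h D U hD hc (hDE.mono subset_rfl hU)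
  exact hno a ha b hb hab

lemma Reach.mono {Z Z' : Finset V} (h : Z ⊆ Z') {v w : V} (hr : Reach G Z v w) :
    Reach G Z' v w :=
  Relation.ReflTransGen.mono (r := MonStep G Z) (p := MonStep G Z')
    (fun _ _ hs => ⟨hs.1, hs.2.1, h hs.2.2⟩) _ _ hr

lemma Reach.le {Z : Finset V} {v w : V} (hr : Reach G Z v w) : v ≤ w := by
  induction hr with
  | refl => exact le_rfl
  | tail _ hs ih => exact ih.trans hs.1.le

lemma exists_large_reachSet_of_halving (h : NoHole G t) {Z : Finset V} (m : ℕ) :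
    ∀ X D E : Finset V, X.card ≤ 2 ^ m → D ⊆ Z → (∀ d ∈ D, ∃ x ∈ X, Reach G Z x d) →
      2 * t ≤ D.card → E ⊆ Z → Before D E → 3 * t * m ≤ E.card →
      ∃ v ∈ X, t ≤ (reachSet G Z v).card := by
  classical
  have ht := h.pos
  induction m with
  | zero =>
    intro X D E hX hDZ hD hDc _ _ _
    have hDne : D.Nonempty := Finset.card_pos.1 (by omega)
    obtain ⟨d, hd⟩ := hDne
    obtain ⟨x, hx, -⟩ := hD d hd
    refine ⟨x, hx, le_trans (by omega : t ≤ D.card) (Finset.card_le_card ?_)⟩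
    intro e he
    obtain ⟨y, hy, hr⟩ := hD e he
    have : y = x := Finset.card_le_one.1 (by simpa using hX) y hy x hx
    exact mem_reachSet.2 ⟨hDZ he, this ▸ hr⟩
  | succ m ih =>
    intro X D E hX hDZ hD hDc hEZ hDE hE
    obtain ⟨X₁, hX₁, hX₁c, -⟩ := exists_initial_segment X (a := X.card / 2) (by omega)
    have key : ∀ X' ⊆ X, X'.card ≤ 2 ^ m →
        t ≤ (D.filter fun d => ∃ x ∈ X', Reach G Z x d).card →
        ∃ v ∈ X, t ≤ (reachSet G Z v).card := by
      intro X' hX' hX'c hlarge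
      obtain ⟨E₁, hE₁, hE₁c, hE₁b⟩ := exists_initial_segment E (a := 3 * t) (by nlinarith)
      set D' := D.filter fun d => ∃ x ∈ X', Reach G Z x d with hD'
      have hD'D : D' ⊆ D := Finset.filter_subset _ _
      set N := E₁.filter fun e => ∃ d ∈ D', G.Adj d e with hN
      have hNc : (E₁ \ N).card < t := by
        refine h.card_unreached_lt hlarge (hDE.mono hD'D hE₁) Finset.sdiff_subset ?_
        intro d hd u hu hadj
        rw [Finset.mem_sdiff] at hu
        exact hu.2 (Finset.mem_filter.2 ⟨hu.1, d, hd, hadj⟩)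
      have hNE₁ : N ⊆ E₁ := Finset.filter_subset _ _
      rw [Finset.card_sdiff_of_subset hNE₁] at hNc
      have hNr : ∀ e ∈ N, ∃ x ∈ X', Reach G Z x e := by
        intro e he
        obtain ⟨heE, d, hd, hadj⟩ := Finset.mem_filter.1 he
        obtain ⟨hdD, x, hx, hr⟩ := Finset.mem_filter.1 hd
        exact ⟨x, hx, hr.tail ⟨hDE d hdD e (hE₁ heE), hadj, hEZ (hE₁ heE)⟩⟩
      have hEc : 3 * t * m ≤ (E \ E₁).card := by
        rw [Finset.card_sdiff_of_subset hE₁]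
        have : 3 * t * (m + 1) = 3 * t * m + 3 * t := by ring
        omega
      obtain ⟨v, hv, hvc⟩ := ih X' N (E \ E₁) hX'c ((hNE₁.trans hE₁).trans hEZ) hNr (by omega)
        (Finset.sdiff_subset.trans hEZ) (hE₁b.mono hNE₁ subset_rfl) hEc
      exact ⟨v, hX' hv, hvc⟩
    have hpow : 2 ^ (m + 1) = 2 * 2 ^ m := by ring
    by_cases h₁ : t ≤ (D.filter fun d => ∃ x ∈ X₁, Reach G Z x d).card
    · exact key X₁ hX₁ (by omega) h₁
    · refine key (X \ X₁) Finset.sdiff_subset ?_ ?_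
      · rw [Finset.card_sdiff_of_subset hX₁]; omega
      · have hcov : D ⊆ (D.filter fun d => ∃ x ∈ X₁, Reach G Z x d) ∪
            (D.filter fun d => ∃ x ∈ X \ X₁, Reach G Z x d) := by
          intro d hd
          obtain ⟨x, hx, hr⟩ := hD d hd
          rw [Finset.mem_union, Finset.mem_filter, Finset.mem_filter]
          by_cases hx₁ : x ∈ X₁
          · exact Or.inl ⟨hd, x, hx₁, hr⟩
          · exact Or.inr ⟨hd, x, Finset.mem_sdiff.2 ⟨hx, hx₁⟩, hr⟩
        have := (Finset.card_le_card hcov).trans (Finset.card_union_le _ _)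
        omega

lemma NoHole.launches [Fintype V] (h : NoHole G t) {m : ℕ} (hm : Fintype.card V ≤ 2 ^ m) :
    Launches G t (3 * t * (m + 1)) := by
  classical
  intro X Z hX hZ hXZ
  obtain ⟨E₁, hE₁, hE₁c, hE₁b⟩ := exists_initial_segment Z (a := 3 * t) (by nlinarith)
  set N := E₁.filter fun e => ∃ d ∈ X, G.Adj d e with hN
  have hNE₁ : N ⊆ E₁ := Finset.filter_subset _ _
  have hNc : (E₁ \ N).card < t := by
    refine h.card_unreached_lt hX (hXZ.mono subset_rfl hE₁) Finset.sdiff_subset ?_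
    intro d hd u hu hadj
    rw [Finset.mem_sdiff] at hu
    exact hu.2 (Finset.mem_filter.2 ⟨hu.1, d, hd, hadj⟩)
  rw [Finset.card_sdiff_of_subset hNE₁] at hNc
  refine exists_large_reachSet_of_halving h m X N (Z \ E₁) ((Finset.card_le_univ X).trans hm)
    (hNE₁.trans hE₁) ?_ (by omega) Finset.sdiff_subset (hE₁b.mono hNE₁ subset_rfl) ?_
  · intro e he
    obtain ⟨heE, d, hd, hadj⟩ := Finset.mem_filter.1 he
    exact ⟨d, hd, Relation.ReflTransGen.single ⟨hXZ d hd e (hE₁ heE), hadj, hE₁ heE⟩⟩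
  · rw [Finset.card_sdiff_of_subset hE₁]
    have : 3 * t * (m + 1) = 3 * t * m + 3 * t := by ring
    omega

lemma Reach.exists_last_nbr {Z : Finset V} {q z : V} (hr : Reach G Z q z) :
    z = q ∨ ∃ q', MonStep G Z q q' ∧ Reach G (nonNbrsIn G q Z) q' z := by
  induction hr with
  | refl => exact Or.inl rfl
  | @tail y z hy hs ih =>
    right
    by_cases hz : G.Adj q z
    · exact ⟨z, ⟨(Reach.le hy).trans_lt hs.1, hz, hs.2.2⟩, Relation.ReflTransGen.refl⟩
    · rcases ih with rfl | ⟨q', hq', hr'⟩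
      · exact absurd hs.2.1 hz
      · exact ⟨q', hq', hr'.tail ⟨hs.1, hs.2.1, mem_nonNbrsIn.2 ⟨hs.2.2, hz⟩⟩⟩

lemma exists_next_vertex (h : NoHole G t) (hL : Launches G t K) {q : V} {W Z : Finset V}
    (hq : t ≤ (reachSet G W q).card) (hWZ : Before W Z)
    (hZ : 2 * t + K ≤ (nonNbrsIn G q Z).card) :
    ∃ q' ∈ W ∪ Z, q < q' ∧ G.Adj q q' ∧
      t ≤ (reachSet G (nonNbrsIn G q (W ∪ Z)) q').card := by
  classical
  set Z₂ := (nonNbrsIn G q Z).filter fun z => q < z ∧ Reach G (W ∪ Z) q z with hZ₂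
  have hZ₂s : Z₂ ⊆ nonNbrsIn G q Z := Finset.filter_subset _ _
  have hun : (nonNbrsIn G q Z \ Z₂).card < t := by
    refine h.card_unreached_lt hq (E := Z) (hWZ.mono (fun x hx => (mem_reachSet.1 hx).1)
      subset_rfl) (Finset.sdiff_subset.trans (nonNbrsIn_subset _ _)) ?_
    intro d hd u hu hadj
    rw [Finset.mem_sdiff] at hu
    have hd' := mem_reachSet.1 hd
    have huZ := nonNbrsIn_subset _ _ hu.1
    have hdu := hWZ d hd'.1 u huZ
    have hr : Reach G (W ∪ Z) q d := hd'.2.mono Finset.subset_union_left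
    exact hu.2 (Finset.mem_filter.2 ⟨hu.1, hr.le.trans_lt hdu,
      hr.tail ⟨hdu, hadj, Finset.mem_union_right _ huZ⟩⟩)
  rw [Finset.card_sdiff_of_subset hZ₂s] at hun
  obtain ⟨F, hF, hFc, hFb⟩ := exists_initial_segment Z₂ (a := t) (by omega)
  obtain ⟨z, hz, hzc⟩ := hL F (Z₂ \ F) hFc.ge
    (by rw [Finset.card_sdiff_of_subset hF]; omega) hFb
  obtain ⟨-, hqz, hrz⟩ := Finset.mem_filter.1 (hF hz)
  rcases hrz.exists_last_nbr with rfl | ⟨q', hq', hr'⟩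
  · exact absurd hqz (lt_irrefl _)
  · refine ⟨q', hq'.2.2, hq'.1, hq'.2.1, hzc.trans (Finset.card_le_card ?_)⟩
    have hsub : Z₂ \ F ⊆ nonNbrsIn G q (W ∪ Z) := by
      intro x hx
      have := mem_nonNbrsIn.1 (hZ₂s (Finset.mem_sdiff.1 hx).1)
      exact mem_nonNbrsIn.2 ⟨Finset.mem_union_right _ this.1, this.2⟩
    intro x hx
    have hx' := mem_reachSet.1 hx
    exact mem_reachSet.2 ⟨hsub hx'.1, hr'.trans (hx'.2.mono hsub)⟩

end Reachability

/-- `A` precedes every set of the list and sends few edges to it; the second components of the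
list are the bounds on the degrees. -/
def SparseTo {V : Type*} [LT V] (G : SimpleGraph V) (A : Finset V) (L : List (Finset V × ℕ)) :
    Prop :=
  ∀ P ∈ L, Before A P.1 ∧ ∀ a ∈ A, (nbrsIn G a P.1).card ≤ P.2

/-- A list of consecutive sets, each large compared with the degrees into it. -/
def BlueChain {V : Type*} [LT V] (G : SimpleGraph V) (K p : ℕ) (L : List (Finset V × ℕ)) :
    Prop :=
  L.Pairwise (fun P Q => Before P.1 Q.1 ∧ ∀ a ∈ P.1, (nbrsIn G a Q.1).card ≤ Q.2) ∧
    ∀ P ∈ L, 4 ^ p * P.2 ≤ P.1.card ∧ 3 * K ≤ P.2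

/-- Remove the neighbours of `q` from all sets of the list. -/
noncomputable def trim {V : Type*} (G : SimpleGraph V) (q : V) (L : List (Finset V × ℕ)) :
    List (Finset V × ℕ) :=
  L.map fun P => (nonNbrsIn G q P.1, P.2)

section Blue

variable {V : Type*} [LinearOrder V] {G : SimpleGraph V} {t K p : ℕ}

lemma SparseTo.trim {A A' : Finset V} {L : List (Finset V × ℕ)} (h : SparseTo G A L)
    (hA : A' ⊆ A) (q : V) : SparseTo G A' (trim G q L) := by
  intro P hP
  obtain ⟨Q, hQ, rfl⟩ := List.mem_map.1 hP
  refine ⟨(h Q hQ).1.mono hA (nonNbrsIn_subset _ _), fun a ha => ?_⟩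
  exact (Finset.card_le_card (nbrsIn_mono a (nonNbrsIn_subset _ _))).trans ((h Q hQ).2 a (hA ha))

lemma BlueChain.trim {L : List (Finset V × ℕ)} (h : BlueChain G K (p + 1) L) {A : Finset V}
    {q : V} (hA : SparseTo G A L) (hq : q ∈ A) : BlueChain G K p (trim G q L) := by
  constructor
  · refine List.pairwise_map.2 (h.1.imp ?_)
    intro P Q hPQ
    refine ⟨hPQ.1.mono (nonNbrsIn_subset _ _) (nonNbrsIn_subset _ _), fun a ha => ?_⟩
    exact (Finset.card_le_card (nbrsIn_mono a (nonNbrsIn_subset _ _))).trans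
      (hPQ.2 a (nonNbrsIn_subset _ _ ha))
  · intro P hP
    obtain ⟨Q, hQ, rfl⟩ := List.mem_map.1 hP
    refine ⟨?_, (h.2 Q hQ).2⟩
    have h₁ := (h.2 Q hQ).1
    have h₂ := (hA Q hQ).2 q hq
    have h₃ := card_nbrsIn_add_card_nonNbrsIn (G := G) q Q.1
    have h₄ : 4 ^ (p + 1) * Q.2 = 4 * (4 ^ p * Q.2) := by ring
    have h₅ : Q.2 ≤ 4 ^ p * Q.2 := Nat.le_mul_of_pos_left _ (by positivity)
    simp only
    omega

lemma not_adj_of_mem_trim {q x : V} {L : List (Finset V × ℕ)}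
    (h : ∃ P ∈ trim G q L, x ∈ P.1) : ¬ G.Adj q x ∧ ∃ P ∈ L, x ∈ P.1 := by
  obtain ⟨P, hP, hx⟩ := h
  obtain ⟨Q, hQ, rfl⟩ := List.mem_map.1 hP
  have := mem_nonNbrsIn.1 hx
  exact ⟨this.2, Q, hQ, this.1⟩

lemma exists_indPath_of_blueChain (h : NoHole G t) (hL : Launches G t K) (htK : t ≤ K) (p : ℕ) :
    (∀ (q : V) (W S : Finset V) (M : ℕ) (L : List (Finset V × ℕ)),
      t ≤ (reachSet G W q).card → Before W S → (∀ s ∈ S, q < s) → 4 ^ p * M ≤ S.card →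
      3 * K ≤ M → SparseTo G (insert q (W ∪ S)) L → BlueChain G K p L → p ≤ 2 * L.length + 1 →
      ∃ l : List V, l.length = p ∧ IndPath G (q :: l) ∧
        ∀ x ∈ l, x ∈ W ∪ S ∨ ∃ P ∈ L, x ∈ P.1) ∧
    (∀ (X : Finset V) (L : List (Finset V × ℕ)), t ≤ X.card → SparseTo G X L →
      BlueChain G K p L → p ≤ 2 * L.length →
      ∃ b ∈ X, ∃ l : List V, l.length = p ∧ IndPath G (b :: l) ∧ ∀ x ∈ l, ∃ P ∈ L, x ∈ P.1) := by
  have ht := h.pos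
  induction p with
  | zero =>
    refine ⟨fun q W S M L _ _ _ _ _ _ _ _ => ⟨[], rfl, trivial, by simp⟩, ?_⟩
    intro X L hX _ _ _
    obtain ⟨b, hb⟩ := Finset.card_pos.1 (ht.trans_le hX)
    exact ⟨b, hb, [], rfl, trivial, by simp⟩
  | succ p ih =>
    obtain ⟨ihS, ihX⟩ := ih
    have hpow : ∀ M : ℕ, 4 ^ (p + 1) * M = 4 * (4 ^ p * M) ∧ M ≤ 4 ^ p * M := fun M =>
      ⟨by ring, Nat.le_mul_of_pos_left _ (by positivity)⟩
    constructor
    · intro q W S M L hq hWS hqS hS hM hsp hbc hp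
      have hcard := card_nbrsIn_add_card_nonNbrsIn (G := G) q S
      obtain ⟨hpow₁, hpow₂⟩ := hpow M
      have hbc' : BlueChain G K p (trim G q L) := hbc.trim hsp (Finset.mem_insert_self _ _)
      by_cases hA : S.card ≤ 2 * (nonNbrsIn G q S).card
      · obtain ⟨Z, hZ, hZc, hZb⟩ := exists_initial_segment (nonNbrsIn G q S) (a := 3 * K)
          (by omega)
        have hZS : Z ⊆ S := hZ.trans (nonNbrsIn_subset _ _)
        have hZq : nonNbrsIn G q Z = Z := Finset.Subset.antisymm (nonNbrsIn_subset _ _)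
          fun x hx => mem_nonNbrsIn.2 ⟨hx, (mem_nonNbrsIn.1 (hZ hx)).2⟩
        obtain ⟨q', hq'm, hqq', hadj, hq'r⟩ := exists_next_vertex h hL hq
          (hWS.mono subset_rfl hZS) (by rw [hZq]; omega)
        have hSS : nonNbrsIn G q S \ Z ⊆ S := Finset.sdiff_subset.trans (nonNbrsIn_subset _ _)
        have hlt : Before (W ∪ Z) (nonNbrsIn G q S \ Z) := by
          intro a ha b hb
          rcases Finset.mem_union.1 ha with ha | ha
          · exact hWS a ha b (hSS hb)
          · exact hZb a ha b hb
        have hWZ : W ∪ Z ⊆ W ∪ S := Finset.union_subset_union_right hZS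
        have hsub : insert q' (nonNbrsIn G q (W ∪ Z) ∪ nonNbrsIn G q S \ Z) ⊆
            insert q (W ∪ S) := by
          refine (Finset.insert_subset (hWZ hq'm) (Finset.union_subset
            ((nonNbrsIn_subset _ _).trans hWZ) (hSS.trans Finset.subset_union_right))).trans
            (Finset.subset_insert _ _)
        obtain ⟨l, hl, hpath, hmem⟩ := ihS q' (nonNbrsIn G q (W ∪ Z)) (nonNbrsIn G q S \ Z) M
          (trim G q L) hq'r (hlt.mono (nonNbrsIn_subset _ _) subset_rfl)
          (fun s hs => hlt q' hq'm s hs)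
          (by rw [Finset.card_sdiff_of_subset hZ]; omega) hM (hsp.trim hsub q) hbc'
          (by simp only [trim, List.length_map]; omega)
        have hmem' : ∀ x ∈ l, ¬ G.Adj q x ∧ (x ∈ W ∪ S ∨ ∃ P ∈ L, x ∈ P.1) := by
          intro x hx
          rcases hmem x hx with hx | hx
          · rcases Finset.mem_union.1 hx with hx | hx
            · have := mem_nonNbrsIn.1 hx
              exact ⟨this.2, Or.inl (hWZ this.1)⟩
            · exact ⟨(mem_nonNbrsIn.1 (Finset.mem_sdiff.1 hx).1).2,
                Or.inl (Finset.mem_union_right _ (hSS hx))⟩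
          · exact ⟨(not_adj_of_mem_trim hx).1, Or.inr (not_adj_of_mem_trim hx).2⟩
        refine ⟨q' :: l, by simp [hl], ⟨hqq', hadj, fun x hx => (hmem' x hx).1, hpath⟩, ?_⟩
        intro x hx
        rcases List.mem_cons.1 hx with rfl | hx
        · exact Or.inl (hWZ hq'm)
        · exact (hmem' x hx).2
      · have hsub : nbrsIn G q S ⊆ insert q (W ∪ S) := (nbrsIn_subset _ _).trans
          (Finset.subset_union_right.trans (Finset.subset_insert _ _))
        obtain ⟨b, hb, l, hl, hpath, hmem⟩ := ihX (nbrsIn G q S) (trim G q L) (by omega)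
          (hsp.trim hsub q) hbc' (by simp only [trim, List.length_map]; omega)
        have hb' := mem_nbrsIn.1 hb
        refine ⟨b :: l, by simp [hl], ⟨hqS b hb'.1, hb'.2,
          fun x hx => (not_adj_of_mem_trim (hmem x hx)).1, hpath⟩, ?_⟩
        intro x hx
        rcases List.mem_cons.1 hx with rfl | hx
        · exact Or.inl (Finset.mem_union_right _ hb'.1)
        · exact Or.inr (not_adj_of_mem_trim (hmem x hx)).2
    · intro X L hX hsp hbc hp
      obtain _ | ⟨⟨S, M⟩, L⟩ := L
      · simp at hp
      obtain ⟨hpow₁, hpow₂⟩ := hpow M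
      have hSM := hbc.2 (S, M) List.mem_cons_self
      have hXS := hsp (S, M) List.mem_cons_self
      have hspL : SparseTo G X L := fun P hP => hsp P (List.mem_cons_of_mem _ hP)
      have hSL : SparseTo G S L := fun P hP => (List.pairwise_cons.1 hbc.1).1 P hP
      have hbcL : BlueChain G K (p + 1) L :=
        ⟨(List.pairwise_cons.1 hbc.1).2, fun P hP => hbc.2 P (List.mem_cons_of_mem _ hP)⟩
      simp only at hSM hXS
      obtain ⟨Z, hZ, hZc, hZb⟩ := exists_initial_segment S (a := K) (by omega)
      obtain ⟨b, hb, hbr⟩ := hL X Z hX hZc.ge (hXS.1.mono subset_rfl hZ)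
      have hdeg := hXS.2 b hb
      have hcard := card_nbrsIn_add_card_nonNbrsIn (G := G) b (S \ Z)
      have hdeg' := Finset.card_le_card (nbrsIn_mono (G := G) b (Finset.sdiff_subset : S \ Z ⊆ S))
      have hSZ := Finset.card_sdiff_of_subset hZ
      obtain ⟨Z', hZ', hZ'c, hZ'b⟩ := exists_initial_segment (nonNbrsIn G b (S \ Z)) (a := 3 * K)
        (by omega)
      have hZ'S : Z' ⊆ S \ Z := hZ'.trans (nonNbrsIn_subset _ _)
      have hZ'q : nonNbrsIn G b Z' = Z' := Finset.Subset.antisymm (nonNbrsIn_subset _ _)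
        fun x hx => mem_nonNbrsIn.2 ⟨hx, (mem_nonNbrsIn.1 (hZ' hx)).2⟩
      obtain ⟨q', hq'm, hqq', hadj, hq'r⟩ := exists_next_vertex h hL hbr
        (hZb.mono subset_rfl hZ'S) (by rw [hZ'q]; omega)
      set S' := nonNbrsIn G b (S \ Z) \ Z' with hS'
      have hSS : S' ⊆ S \ Z := Finset.sdiff_subset.trans (nonNbrsIn_subset _ _)
      have hlt : Before (Z ∪ Z') S' := by
        intro x hx y hy
        rcases Finset.mem_union.1 hx with hx | hx
        · exact hZb x hx y (hSS hy)
        · exact hZ'b x hx y hy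
      have hZZ : Z ∪ Z' ⊆ S := Finset.union_subset hZ (hZ'S.trans Finset.sdiff_subset)
      have hS'S : S' ⊆ S := hSS.trans Finset.sdiff_subset
      have hsub : insert q' (nonNbrsIn G b (Z ∪ Z') ∪ S') ⊆ S :=
        Finset.insert_subset (hZZ hq'm) (Finset.union_subset
          ((nonNbrsIn_subset _ _).trans hZZ) hS'S)
      obtain ⟨l, hl, hpath, hmem⟩ := ihS q' (nonNbrsIn G b (Z ∪ Z')) S' M (trim G b L) hq'r
        (hlt.mono (nonNbrsIn_subset _ _) subset_rfl) (fun s hs => hlt q' hq'm s hs)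
        (by rw [hS', Finset.card_sdiff_of_subset hZ']; omega) (by omega) (hSL.trim hsub b)
        (hbcL.trim hspL hb) (by simp only [trim, List.length_map, List.length_cons] at hp ⊢; omega)
      have hmem' : ∀ x ∈ l, ¬ G.Adj b x ∧ ∃ P ∈ (S, M) :: L, x ∈ P.1 := by
        intro x hx
        rcases hmem x hx with hx | hx
        · rcases Finset.mem_union.1 hx with hx | hx
          · have := mem_nonNbrsIn.1 hx
            exact ⟨this.2, (S, M), List.mem_cons_self, hZZ this.1⟩
          · exact ⟨(mem_nonNbrsIn.1 (Finset.mem_sdiff.1 hx).1).2,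
              (S, M), List.mem_cons_self, hS'S hx⟩
        · obtain ⟨hn, P, hP, hxP⟩ := not_adj_of_mem_trim hx
          exact ⟨hn, P, List.mem_cons_of_mem _ hP, hxP⟩
      refine ⟨b, hb, q' :: l, by simp [hl], ⟨hqq', hadj, fun x hx => (hmem' x hx).1, hpath⟩, ?_⟩
      intro x hx
      rcases List.mem_cons.1 hx with rfl | hx
      · exact ⟨(S, M), List.mem_cons_self, hZZ hq'm⟩
      · exact (hmem' x hx).2

end Blue

/-- `A` precedes `B` and each vertex of `A` is adjacent to at most a `1 / q` fraction of `B`. -/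
def BlueRel {V : Type*} [LT V] (G : SimpleGraph V) (q : ℕ) (A B : Finset V) : Prop :=
  Before A B ∧ ∀ a ∈ A, q * (nbrsIn G a B).card ≤ B.card

/-- Any large subset `X` of `C` contains a vertex with many neighbours in any large subset `Y`
of `D`. -/
def Red {V : Type*} (G : SimpleGraph V) (C D : Finset V) (h θ d : ℝ) : Prop :=
  ∀ X ⊆ C, h * C.card ≤ X.card → ∀ Y ⊆ D, θ * D.card ≤ Y.card →
    ∃ a ∈ X, d * D.card ≤ (nbrsIn G a Y).card

/-- The standing assumptions on an ordered graph without long induced increasing paths. -/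
structure PathFree {n : ℕ} (G : SimpleGraph (Fin n)) (k t K : ℕ) : Prop where
  noHole : NoHole G t
  launches : Launches G t K
  le : t ≤ K
  length_lt : ∀ l : List (Fin n), IndPath G l → l.length < 2 * k

section IndPath

variable {V : Type*} [LinearOrder V] {G : SimpleGraph V} {t K : ℕ}

lemma exists_indPath_of_blueRel (h : NoHole G t) (hL : Launches G t K) (htK : t ≤ K) {p : ℕ}
    {X : Finset V} {L : List (Finset V)} (hX : t ≤ X.card)
    (hXL : ∀ S ∈ L, BlueRel G (4 ^ p) X S) (hLL : L.Pairwise (BlueRel G (4 ^ p)))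
    (hS : ∀ S ∈ L, 4 ^ p * (3 * K) ≤ S.card) (hp : p ≤ 2 * L.length) :
    ∃ b ∈ X, ∃ l : List V, l.length = p ∧ IndPath G (b :: l) ∧ ∀ x ∈ l, ∃ S ∈ L, x ∈ S := by
  have hpos : 0 < 4 ^ p := by positivity
  have hrel : ∀ A S : Finset V, BlueRel G (4 ^ p) A S →
      Before A S ∧ ∀ a ∈ A, (nbrsIn G a S).card ≤ S.card / 4 ^ p := fun A S hAS =>
    ⟨hAS.1, fun a ha => (Nat.le_div_iff_mul_le hpos).2 (by
      rw [Nat.mul_comm]; exact hAS.2 a ha)⟩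
  have hsp : SparseTo G X (L.map fun S => (S, S.card / 4 ^ p)) := by
    intro P hP
    obtain ⟨S, hS, rfl⟩ := List.mem_map.1 hP
    exact hrel X S (hXL S hS)
  have hbc : BlueChain G K p (L.map fun S => (S, S.card / 4 ^ p)) := by
    refine ⟨List.pairwise_map.2 (hLL.imp fun {A B} hAB => hrel A B hAB), fun P hP => ?_⟩
    obtain ⟨S, hSL, rfl⟩ := List.mem_map.1 hP
    exact ⟨Nat.mul_div_le _ _, (Nat.le_div_iff_mul_le hpos).2 (by
      rw [Nat.mul_comm]; exact hS S hSL)⟩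
  obtain ⟨b, hb, l, hl, hpath, hmem⟩ := (exists_indPath_of_blueChain h hL htK p).2 X
    (L.map fun S => (S, S.card / 4 ^ p)) hX hsp hbc (by simpa using hp)
  refine ⟨b, hb, l, hl, hpath, fun x hx => ?_⟩
  obtain ⟨P, hP, hxP⟩ := hmem x hx
  obtain ⟨S, hS, rfl⟩ := List.mem_map.1 hP
  exact ⟨S, hS, hxP⟩

lemma IndPath.getElem (l : List V) (hl : IndPath G l) :
    ∀ (i j : ℕ) (hi : i < l.length) (hj : j < l.length), i < j →
      l[i] < l[j] ∧ (G.Adj l[i] l[j] ↔ i + 1 = j) := by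
  induction l with
  | nil => intro i j hi; simp at hi
  | cons a l ih =>
    obtain _ | ⟨b, l⟩ := l
    · intro i j hi hj hij
      simp at hj; omega
    · obtain ⟨hab, hadj, hno, hpath⟩ := hl
      have ih := ih hpath
      intro i j hi hj hij
      obtain _ | j := j
      · omega
      obtain _ | i := i
      · obtain _ | j := j
        · simpa using ⟨hab, hadj⟩
        · simp only [List.length_cons] at hj
          refine ⟨hab.trans ?_, ?_⟩
          · exact (ih 0 (j + 1) (by simp) (by simpa using hj) (by omega)).1
          · simpa using hno _ (List.getElem_mem (by omega))
      · simpa using ih i j (by simpa using hi) (by simpa using hj) (by omega)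

lemma IndPath.hasIndMonPath {n m : ℕ} {G : SimpleGraph (Fin n)} {l : List (Fin n)}
    (hl : IndPath G l) (hm : m ≤ l.length) : HasIndMonPath G m := by
  refine ⟨fun i => l[(i : ℕ)], fun i j hij => (hl.getElem l i j _ _ hij).1, fun i j => ?_⟩
  rcases lt_trichotomy i j with hij | rfl | hij
  · have := (hl.getElem l i j (by omega) (by omega) hij).2
    rw [this]
    have : (i : ℕ) < j := hij
    omega
  · simp
  · have := (hl.getElem l j i (by omega) (by omega) hij).2
    rw [G.adj_comm, this]
    have : (j : ℕ) < i := hij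
    omega

end IndPath

lemma Red.mono {V : Type*} {G : SimpleGraph V} {C D C' D' : Finset V} {h θ d h' θ' d' : ℝ}
    (hr : Red G C D h θ d) (hC : C' ⊆ C) (hD : D' ⊆ D) (hh : h * C.card ≤ h' * C'.card)
    (hθ : θ * D.card ≤ θ' * D'.card) (hd : d' ≤ d) (hd₀ : 0 ≤ d) : Red G C' D' h' θ' d' := by
  intro X hX hXc Y hY hYc
  obtain ⟨a, ha, hac⟩ := hr X (hX.trans hC) (hh.trans hXc) Y (hY.trans hD) (hθ.trans hYc)
  refine ⟨a, ha, le_trans ?_ hac⟩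
  have : (D'.card : ℝ) ≤ D.card := by exact_mod_cast Finset.card_le_card hD
  gcongr

lemma exists_red_or_blue {q : ℕ} (hq : 0 < q) {h θ : ℝ} (hh : 0 < h) (hθ : 0 < θ) (m : ℕ) :
    ∃ ρ d C₀ : ℝ, 0 < ρ ∧ 0 < d ∧ ∀ (n : ℕ) (G : SimpleGraph (Fin n)) (B : Finset (Fin n)),
      C₀ ≤ B.card →
      (∃ C ⊆ B, ∃ D ⊆ B, Before C D ∧ ρ * B.card ≤ C.card ∧ ρ * B.card ≤ D.card ∧
        Red G C D h θ d) ∨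
      ∃ L : List (Finset (Fin n)), L.length = m ∧ (∀ S ∈ L, S ⊆ B ∧ ρ * B.card ≤ S.card) ∧
        L.Pairwise (BlueRel G q) := by
  induction m with
  | zero =>
    exact ⟨1, 1, 0, one_pos, one_pos, fun n G B _ => Or.inr ⟨[], rfl, by simp, List.Pairwise.nil⟩⟩
  | succ m ih =>
    obtain ⟨ρ', d', C', hρ', hd', ih⟩ := ih
    have hq' : (0 : ℝ) < q := by exact_mod_cast hq
    refine ⟨min (1 / 3) (min (h / 3) (ρ' * θ / 3)), min d' (θ * ρ' / q), max 2 (3 * C' / θ),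
      by positivity, by positivity, fun n G B hB => ?_⟩
    set ρ := min (1 / 3) (min (h / 3) (ρ' * θ / 3)) with hρ
    have hρ₁ : ρ ≤ 1 / 3 := min_le_left _ _
    have hρ₂ : ρ ≤ h / 3 := (min_le_right _ _).trans (min_le_left _ _)
    have hρ₃ : ρ ≤ ρ' * θ / 3 := (min_le_right _ _).trans (min_le_right _ _)
    have hB₂ : 2 ≤ B.card := by exact_mod_cast (le_max_left _ _).trans hB
    have hBC : 3 * C' / θ ≤ B.card := (le_max_right _ _).trans hB
    have hB₀ : (0 : ℝ) ≤ B.card := Nat.cast_nonneg _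
    obtain ⟨B₁, hB₁, hB₁c, hB₁b⟩ := exists_initial_segment B (a := B.card / 2) (by omega)
    have hB₁s : (B.card : ℝ) / 3 ≤ B₁.card := by
      have : B.card ≤ B₁.card * 3 := by omega
      rw [div_le_iff₀ (by norm_num)]
      exact_mod_cast this
    have hB₂s : (B.card : ℝ) / 3 ≤ (B \ B₁).card := by
      have : B.card ≤ (B \ B₁).card * 3 := by
        rw [Finset.card_sdiff_of_subset hB₁]; omega
      rw [div_le_iff₀ (by norm_num)]
      exact_mod_cast this
    by_cases hred : Red G B₁ (B \ B₁) h θ (min d' (θ * ρ' / q))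
    · refine Or.inl ⟨B₁, hB₁, B \ B₁, Finset.sdiff_subset, hB₁b, ?_, ?_, hred⟩
      · nlinarith
      · nlinarith
    · unfold Red at hred
      push Not at hred
      obtain ⟨X, hX, hXc, Y, hY, hYc, hXY⟩ := hred
      have hYB : θ / 3 * B.card ≤ Y.card := by nlinarith
      have hYB' : ρ * B.card ≤ ρ' * Y.card := by nlinarith
      have hYs : Y ⊆ B := hY.trans Finset.sdiff_subset
      have hYC : C' ≤ Y.card := by
        rw [div_le_iff₀ hθ] at hBC
        nlinarith
      rcases ih n G Y hYC with ⟨C, hC, D, hD, hCD, hCc, hDc, hr⟩ | ⟨L, hL, hLs, hLp⟩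
      · exact Or.inl ⟨C, hC.trans hYs, D, hD.trans hYs, hCD, hYB'.trans hCc, hYB'.trans hDc,
          hr.mono subset_rfl subset_rfl le_rfl le_rfl (min_le_left _ _) hd'.le⟩
      · refine Or.inr ⟨X :: L, by simp [hL], ?_, List.pairwise_cons.2 ⟨?_, hLp⟩⟩
        · intro S hS
          rcases List.mem_cons.1 hS with rfl | hS
          · exact ⟨hX.trans hB₁, by nlinarith⟩
          · exact ⟨(hLs S hS).1.trans hYs, hYB'.trans (hLs S hS).2⟩
        · intro S hS
          refine ⟨hB₁b.mono hX ((hLs S hS).1.trans hY), fun a ha => ?_⟩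
          have h₁ := hXY a ha
          have h₂ : ((nbrsIn G a S).card : ℝ) ≤ (nbrsIn G a Y).card := by
            exact_mod_cast Finset.card_le_card (nbrsIn_mono a (hLs S hS).1)
          have h₃ : min d' (θ * ρ' / q) * (B \ B₁).card ≤ θ * ρ' / q * (B \ B₁).card := by
            gcongr
            exact min_le_right _ _
          have h₄ : θ * ρ' / q * (B \ B₁).card = ρ' * (θ * (B \ B₁).card) / q := by ring
          have h₅ : ρ' * (θ * (B \ B₁).card) / q ≤ S.card / q := by
            have := (hLs S hS).2
            gcongr
            nlinarith
          have h₆ : ((nbrsIn G a S).card : ℝ) ≤ S.card / q := by linarith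
          rw [le_div_iff₀ hq'] at h₆
          have h₇ : (q : ℝ) * (nbrsIn G a S).card ≤ S.card := by linarith
          exact_mod_cast h₇

lemma exists_red_pair (k : ℕ) {h θ : ℝ} (hh : 0 < h) (hθ : 0 < θ) :
    ∃ ρ d C₀ : ℝ, 0 < ρ ∧ 0 < d ∧ ∀ (n t K : ℕ) (G : SimpleGraph (Fin n)), PathFree G k t K →
      ∀ B : Finset (Fin n), C₀ * K ≤ B.card →
      ∃ C ⊆ B, ∃ D ⊆ B, Before C D ∧ ρ * B.card ≤ C.card ∧ ρ * B.card ≤ D.card ∧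
        Red G C D h θ d := by
  obtain ⟨ρ, d, C', hρ, hd, H⟩ := exists_red_or_blue (q := 4 ^ (2 * k)) (by positivity) hh hθ
    (k + 1)
  refine ⟨ρ, d, max (max C' 0) (4 ^ (2 * k) * 3 / ρ), hρ, hd, fun n t K G hG B hB => ?_⟩
  have hK : (1 : ℝ) ≤ K := by exact_mod_cast hG.noHole.pos.trans_le hG.le
  have hB₁ : C' ≤ B.card := by
    refine le_trans ?_ hB
    have h₀ : 0 ≤ max C' 0 := le_max_right _ _
    have : max C' 0 ≤ max (max C' 0) (4 ^ (2 * k) * 3 / ρ) * K :=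
      (le_mul_of_one_le_right h₀ hK).trans
        (mul_le_mul_of_nonneg_right (le_max_left _ _) (by linarith))
    exact (le_max_left _ _).trans this
  have hB₂ : 4 ^ (2 * k) * (3 * K) ≤ ρ * B.card := by
    have : 4 ^ (2 * k) * 3 / ρ * K ≤ B.card := le_trans (by gcongr; exact le_max_right _ _) hB
    calc (4 : ℝ) ^ (2 * k) * (3 * K) = ρ * (4 ^ (2 * k) * 3 / ρ * K) := by field_simp
      _ ≤ ρ * B.card := by gcongr
  rcases H n G B hB₁ with hr | ⟨L, hL, hLs, hLp⟩
  · exact hr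
  · exfalso
    obtain _ | ⟨X, L⟩ := L
    · simp at hL
    have hS : ∀ S ∈ X :: L, 4 ^ (2 * k) * (3 * K) ≤ S.card := by
      intro S hS
      exact_mod_cast hB₂.trans (hLs S hS).2
    rw [List.pairwise_cons] at hLp
    have hXc := hS X List.mem_cons_self
    have hpos : 0 < 4 ^ (2 * k) := by positivity
    obtain ⟨b, hb, l, hl, hpath, -⟩ := exists_indPath_of_blueRel hG.noHole hG.launches hG.le
      (by have := hG.le; nlinarith) hLp.1 hLp.2 (fun S h => hS S (List.mem_cons_of_mem _ h))
      (by simp at hL; omega)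
    have := hG.length_lt _ hpath
    simp only [List.length_cons] at this
    omega

lemma exists_cross {η θ δ : ℝ} (hη : 0 < η) (hθ : 0 < θ) (hθ₁ : θ ≤ 1) (hδ : 0 < δ)
    (I : Finset ℕ) :
    ∃ ρ : ℝ, 0 < ρ ∧ ∀ (n : ℕ) (G : SimpleGraph (Fin n)) (B : Finset (Fin n))
      (C : ℕ → Finset (Fin n)), ∃ B' ⊆ B, ∃ C' : ℕ → Finset (Fin n),
        ρ * B.card ≤ B'.card ∧ (∀ l, C' l ⊆ C l ∧ θ * (C l).card ≤ (C' l).card) ∧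
        ∀ l ∈ I, (∀ b ∈ B', ((nbrsIn G b (C' l)).card : ℝ) ≤ δ * (C' l).card) ∨
          Red G B' (C' l) η θ (δ * θ) := by
  induction I using Finset.induction_on with
  | empty =>
    refine ⟨1, one_pos, fun n G B C => ⟨B, subset_rfl, C, by simp, fun l => ⟨subset_rfl, ?_⟩,
      by simp⟩⟩
    exact mul_le_of_le_one_left (Nat.cast_nonneg _) hθ₁
  | insert a I ha ih =>
    obtain ⟨ρ, hρ, ih⟩ := ih
    refine ⟨η * ρ * ρ ⊓ ρ, by positivity, fun n G B C => ?_⟩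
    have hmin₁ : η * ρ * ρ ⊓ ρ ≤ η * ρ * ρ := min_le_left _ _
    have hmin₂ : η * ρ * ρ ⊓ ρ ≤ ρ := min_le_right _ _
    by_cases hred : Red G B (C a) (η * ρ) θ (δ * θ)
    · obtain ⟨B', hB', C', hB'c, hC', hrel⟩ := ih n G B C
      refine ⟨B', hB', Function.update C' a (C a), ?_, fun l => ?_, fun l hl => ?_⟩
      · exact le_trans (by gcongr) hB'c
      · rcases eq_or_ne l a with rfl | hla
        · simpa using mul_le_of_le_one_left (Nat.cast_nonneg _) hθ₁
        · simpa [hla] using hC' l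
      · rcases eq_or_ne l a with rfl | hla
        · right
          rw [Function.update_self]
          refine hred.mono hB' subset_rfl ?_ le_rfl le_rfl (by positivity)
          rw [mul_assoc]
          gcongr
        · rw [Function.update_of_ne hla]
          exact hrel l (Finset.mem_of_mem_insert_of_ne hl hla)
    · unfold Red at hred
      push Not at hred
      obtain ⟨X, hX, hXc, Y, hY, hYc, hXY⟩ := hred
      obtain ⟨B', hB', C', hB'c, hC', hrel⟩ := ih n G X C
      refine ⟨B', hB'.trans hX, Function.update C' a Y, ?_, fun l => ?_, fun l hl => ?_⟩
      · calc (η * ρ * ρ ⊓ ρ) * (B.card : ℝ) ≤ η * ρ * ρ * B.card := by gcongr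
          _ = ρ * (η * ρ * B.card) := by ring
          _ ≤ ρ * X.card := by gcongr
          _ ≤ B'.card := hB'c
      · rcases eq_or_ne l a with rfl | hla
        · simpa using ⟨hY, hYc⟩
        · simpa [hla] using hC' l
      · rcases eq_or_ne l a with rfl | hla
        · left
          rw [Function.update_self]
          intro b hb
          refine (hXY b (hB' hb)).le.trans ?_
          rw [mul_assoc]
          gcongr
        · rw [Function.update_of_ne hla]
          exact hrel l (Finset.mem_of_mem_insert_of_ne hl hla)

lemma exists_red_blue_clusters (k R : ℕ) {θ δ : ℝ} (hθ : 0 < θ) (hθ₁ : θ ≤ 1) (hδ : 0 < δ)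
    (r : ℕ) (hr : r ≤ R) :
    ∃ (ρ C₀ : ℝ) (h d : ℕ → ℝ), 0 < ρ ∧ ρ ≤ 1 ∧ (∀ i, 0 < h i ∧ h i ≤ 1 / 2) ∧ (∀ i, 0 < d i) ∧
      ∀ (n t K : ℕ) (G : SimpleGraph (Fin n)), PathFree G k t K →
      ∀ B : ℕ → Finset (Fin n), (∀ l < R, C₀ * K ≤ (B l).card) →
      ∃ C D : ℕ → Finset (Fin n),
        (∀ l < R, C l ⊆ B l ∧ ρ * (B l).card ≤ (C l).card) ∧
        (∀ i < r, D i ⊆ B i ∧ ρ * (B i).card ≤ (D i).card ∧ Before (C i) (D i) ∧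
          Red G (C i) (D i) (h i) θ (2 * d i)) ∧
        ∀ i < r, ∀ l, i < l → l < R → Red G (D i) (C l) (d i) θ (2 * h l) ∨
          ∀ b ∈ C i ∪ D i, ((nbrsIn G b (C l)).card : ℝ) ≤ δ * (C l).card := by
  induction r with
  | zero =>
    refine ⟨1, 0, fun _ => 1 / 2, fun _ => 1, one_pos, le_rfl, by norm_num, by simp,
      fun n t K G _ B _ => ⟨B, B, by simp, by simp, by simp⟩⟩
  | succ r ih =>
    obtain ⟨ρ', C', h', d', hρ', hρ'₁, hh', hd', ih⟩ := ih (by omega)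
    obtain ⟨ρs, ds, Cs, hρs, hds, hself⟩ := exists_red_pair k (mul_pos (hh' r).1 hρ') hθ
    have hθc : 0 < θ * ρ' := by positivity
    have hθc₁ : θ * ρ' ≤ 1 := mul_le_one₀ hθ₁ hρ'.le hρ'₁
    obtain ⟨ρc, hρc, hcross⟩ := exists_cross (η := ds / 2 * ρs) (δ := δ * ρ') (by positivity) hθc
      hθc₁ (by positivity) ((Finset.range R).filter (r < ·))
    set κ := min (ρs * ρc) (θ * ρ') with hκ
    have hκ₀ : 0 < κ := by positivity
    have hκ₁ : κ ≤ 1 := (min_le_right _ _).trans hθc₁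
    have hκs : κ ≤ ρs * ρc := min_le_left _ _
    have hκc : κ ≤ θ * ρ' := min_le_right _ _
    set σ := δ * ρ' * (θ * ρ') with hσ
    have hσ₀ : 0 < σ := by positivity
    refine ⟨ρ' * κ, max (Cs / ρc) (C' / κ), fun l => if r < l then min (h' l) (σ / 2) else h' l,
      Function.update d' r (ds / 2), by positivity, mul_le_one₀ hρ'₁ hκ₀.le hκ₁, ?_, ?_, ?_⟩
    · intro i
      dsimp only
      have := hh' i
      split_ifs
      · exact ⟨lt_min this.1 (by positivity), (min_le_left _ _).trans this.2⟩
      · exact this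
    · intro i
      rcases eq_or_ne i r with rfl | hi
      · simpa using hds
      · simpa [hi] using hd' i
    intro n t K G hG B hB
    have hBs : ∀ l < R, Cs * K ≤ ρc * (B l).card := by
      intro l hl
      have : Cs / ρc * K ≤ (B l).card :=
        le_trans (mul_le_mul_of_nonneg_right (le_max_left _ _) (Nat.cast_nonneg _)) (hB l hl)
      rw [div_mul_eq_mul_div, div_le_iff₀ hρc] at this
      linarith
    have hBc : ∀ l < R, C' * K ≤ κ * (B l).card := by
      intro l hl
      have : C' / κ * K ≤ (B l).card :=
        le_trans (mul_le_mul_of_nonneg_right (le_max_right _ _) (Nat.cast_nonneg _)) (hB l hl)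
      rw [div_mul_eq_mul_div, div_le_iff₀ hκ₀] at this
      linarith
    obtain ⟨B', hB', E, hB'c, hE, hrel⟩ := hcross n G (B r) B
    obtain ⟨P, hP, Q, hQ, hPQ, hPc, hQc, hred⟩ := hself n t K G hG B'
      ((hBs r (by omega)).trans hB'c)
    have hsc : κ * (B r).card ≤ ρs * B'.card := by
      calc κ * (B r).card ≤ ρs * ρc * (B r).card := by gcongr
        _ = ρs * (ρc * (B r).card) := by ring
        _ ≤ ρs * B'.card := by gcongr
    set F : ℕ → Finset (Fin n) := fun l => if l = r then P else if r < l then E l else B l with hF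
    have hFr : F r = P := by simp [hF]
    have hFgt : ∀ l, r < l → F l = E l := fun l hl => by simp [hF, hl, hl.ne']
    have hFlt : ∀ l, l < r → F l = B l := fun l hl => by simp [hF, hl.ne, hl.not_gt]
    have hFB : ∀ l, F l ⊆ B l ∧ κ * (B l).card ≤ (F l).card := by
      intro l
      rcases lt_trichotomy l r with hl | rfl | hl
      · rw [hFlt l hl]
        exact ⟨subset_rfl, mul_le_of_le_one_left (Nat.cast_nonneg _) hκ₁⟩
      · rw [hFr]
        exact ⟨hP.trans hB', hsc.trans hPc⟩
      · rw [hFgt l hl]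
        exact ⟨(hE l).1, le_trans (by gcongr) (hE l).2⟩
    obtain ⟨C, D, hC, hD, hCD⟩ := ih n t K G hG F fun l hl => (hBc l hl).trans (hFB l).2
    have hDne : ∀ i < r, Function.update D r Q i = D i := fun i hi =>
      Function.update_of_ne hi.ne _ _
    have hdne : ∀ i < r, Function.update d' r (ds / 2) i = d' i := fun i hi =>
      Function.update_of_ne hi.ne _ _
    have hCr := hC r (by omega)
    rw [hFr] at hCr
    refine ⟨C, Function.update D r Q, fun l hl => ⟨(hC l hl).1.trans (hFB l).1, ?_⟩, ?_, ?_⟩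
    · calc ρ' * κ * (B l).card = ρ' * (κ * (B l).card) := by ring
        _ ≤ ρ' * (F l).card := by gcongr; exact (hFB l).2
        _ ≤ (C l).card := (hC l hl).2
    · intro i hi
      rcases Nat.lt_succ_iff_lt_or_eq.1 hi with hi | rfl
      · have hDi := hD i hi
        rw [hFlt i hi] at hDi
        simp only [hDne i hi, hdne i hi, if_neg hi.not_gt]
        refine ⟨hDi.1, le_trans ?_ hDi.2.1, hDi.2.2⟩
        gcongr
        exact mul_le_of_le_one_right hρ'.le hκ₁
      · simp only [Function.update_self, if_neg (lt_irrefl _)]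
        refine ⟨hQ.trans hB', ?_, hPQ.mono hCr.1 subset_rfl, ?_⟩
        · refine le_trans ?_ (hsc.trans hQc)
          gcongr
          exact mul_le_of_le_one_left hκ₀.le hρ'₁
        · refine hred.mono hCr.1 subset_rfl ?_ le_rfl (by linarith) hds.le
          rw [mul_assoc]
          have := (hh' i).1
          gcongr
          exact hCr.2
    · intro i hi l hil hl
      rcases Nat.lt_succ_iff_lt_or_eq.1 hi with hi | rfl
      · rw [hDne i hi, hdne i hi]
        refine (hCD i hi l hil hl).imp_left fun hr => ?_
        refine hr.mono subset_rfl subset_rfl le_rfl le_rfl ?_ (by linarith [(hh' l).1])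
        dsimp only
        split_ifs
        · linarith [min_le_left (h' l) (σ / 2)]
        · exact le_rfl
      · simp only [Function.update_self, if_pos hil]
        have hCl := hC l hl
        rw [hFgt l hil] at hCl
        rcases hrel l (by simp [hil, hl]) with hb | hr
        · right
          intro b hb'
          have hbB : b ∈ B' := by
            rcases Finset.mem_union.1 hb' with hb' | hb'
            · exact hP (hCr.1 hb')
            · exact hQ hb'
          calc ((nbrsIn G b (C l)).card : ℝ) ≤ (nbrsIn G b (E l)).card := by
                exact_mod_cast Finset.card_le_card (nbrsIn_mono b hCl.1)
            _ ≤ δ * ρ' * (E l).card := hb b hbB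
            _ = δ * (ρ' * (E l).card) := by ring
            _ ≤ δ * (C l).card := by gcongr; exact hCl.2
        · left
          refine hr.mono hQ hCl.1 ?_ ?_ ?_ hσ₀.le
          · rw [mul_assoc]
            gcongr
          · rw [mul_assoc]
            gcongr
            exact hCl.2
          · linarith [min_le_right (h' l) (σ / 2)]

lemma exists_red_chain_blue_tail (red : ℕ → ℕ → Prop) {k : ℕ} (hk : 1 ≤ k) :
    ∀ S : Finset ℕ, k.choose 2 + 1 ≤ S.card → ∃ c bl : List ℕ, (∀ x ∈ c ++ bl, x ∈ S) ∧
      (c ++ bl).Pairwise (· < ·) ∧ c.IsChain red ∧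
      (∃ z, c.getLast? = some z ∧ (z :: bl).Pairwise fun i j => ¬ red i j) ∧
      c.length + bl.length = k := by
  classical
  induction k, hk using Nat.le_induction with
  | base =>
    intro S hS
    obtain ⟨z, hz⟩ := Finset.card_pos.1 (by omega : 0 < S.card)
    exact ⟨[z], [], by simpa, by simp, by simp, ⟨z, by simp, by simp⟩, rfl⟩
  | succ k hk ih =>
    intro S hS
    set S₀ := S.filter fun i => ∀ j ∈ S, j < i → ¬ red j i with hS₀
    have hS₀S : S₀ ⊆ S := Finset.filter_subset _ _
    by_cases hc : k + 1 ≤ S₀.card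
    · obtain ⟨l, hlen, hmem, hlt⟩ : ∃ l : List ℕ, l.length = k + 1 ∧ (∀ x ∈ l, x ∈ S₀) ∧
          l.Pairwise (· < ·) := by
        have hsub := List.take_sublist (k + 1) (S₀.sort (· ≤ ·))
        refine ⟨_, ?_, fun x hx => (Finset.mem_sort _).1 (hsub.subset hx),
          (Finset.sortedLT_sort S₀).pairwise.sublist hsub⟩
        rw [List.length_take, Finset.length_sort]
        omega
      obtain _ | ⟨z, bl⟩ := l
      · simp at hlen
      · refine ⟨[z], bl, fun x hx => hS₀S (hmem x hx), hlt, by simp, ⟨z, by simp, ?_⟩, ?_⟩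
        · refine List.Pairwise.imp_of_mem ?_ hlt
          intro a b ha hb hab
          exact (Finset.mem_filter.1 (hmem b hb)).2 a (hS₀S (hmem a ha)) hab
        · simpa [Nat.add_comm] using hlen
    · have hchoose : (k + 1).choose 2 = k + k.choose 2 := by
        rw [Nat.choose_succ_succ' k 1, Nat.choose_one_right]
      obtain ⟨c, bl, hcm, hlt, hch, ⟨z, hz, hbl⟩, hlen⟩ := ih (S \ S₀) (by
        rw [Finset.card_sdiff_of_subset hS₀S]; omega)
      obtain _ | ⟨i, c⟩ := c
      · simp at hz
      have hi := Finset.mem_sdiff.1 (hcm i (by simp))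
      obtain ⟨j, hj, hji, hred⟩ : ∃ j ∈ S, j < i ∧ red j i := by
        by_contra! hno
        exact hi.2 (Finset.mem_filter.2 ⟨hi.1, hno⟩)
      refine ⟨j :: i :: c, bl, ?_, ?_, List.IsChain.cons_cons hred hch, ⟨z, ?_, hbl⟩, ?_⟩
      · intro x hx
        rcases List.mem_cons.1 hx with rfl | hx
        · exact hj
        · exact (Finset.mem_sdiff.1 (hcm x hx)).1
      · refine List.pairwise_cons.2 ⟨fun x hx => ?_, hlt⟩
        rcases List.mem_cons.1 hx with rfl | hx
        · exact hji
        · exact hji.trans ((List.pairwise_cons.1 hlt).1 x hx)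
      · simpa [List.getLast?_cons_cons] using hz
      · simp only [List.length_cons] at hlen ⊢
        omega

lemma exists_indPath_of_red_chain {n k t K : ℕ} {G : SimpleGraph (Fin n)}
    (hG : PathFree G k t K) {N : ℕ} {E : ℕ → Finset (Fin n)} {thr : ℕ → ℝ} {η δ θ : ℝ}
    (hδ : 0 < δ) (hδ₁ : δ ≤ 1) (hθδ : θ ≤ δ ^ N) (hη : ∀ u < N, N * η ≤ thr u)
    (hη₀ : 0 ≤ η)
    (hdense : ∀ u < N, ∀ w < N, u / 2 < w / 2 → ∀ X ⊆ E u, η * (E u).card ≤ X.card →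
      ∀ U ⊆ E w, θ * (E w).card ≤ U.card → ∃ a ∈ X, δ * U.card ≤ (nonNbrsIn G a U).card)
    {bl : List ℕ} (hsize : ∀ w < N, 4 ^ (2 * bl.length) * (3 * K) ≤ θ * (E w).card)
    (hthr : ∀ w < N, K ≤ 2 * thr w * (E w).card)
    (hbl : bl.Pairwise fun u w => Before (E u) (E w) ∧
      ∀ b ∈ E u, ((nbrsIn G b (E w)).card : ℝ) ≤ θ / 4 ^ (2 * bl.length) * (E w).card)
    (ps : List ℕ) :
    ∀ (u s : ℕ) (X : Finset (Fin n)) (U : ℕ → Finset (Fin n)),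
      (u :: ps ++ bl).Pairwise (· < ·) → (∀ w ∈ u :: ps ++ bl, w < N) →
      (u :: ps).IsChain (fun u v => Before (E u) (E v) ∧
        Red G (E u) (E v) (thr u) θ (2 * thr v)) →
      (∀ z, (u :: ps).getLast? = some z → ∀ w ∈ bl, Before (E z) (E w) ∧
        ∀ b ∈ E z, ((nbrsIn G b (E w)).card : ℝ) ≤ θ / 4 ^ (2 * bl.length) * (E w).card) →
      X ⊆ E u → 2 * thr u * (E u).card ≤ X.card →
      (∀ w ∈ ps ++ bl, U w ⊆ E w ∧ δ ^ s * (E w).card ≤ (U w).card) → s + ps.length ≤ N →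
      ∃ b ∈ X, ∃ l : List (Fin n), l.length = ps.length + 2 * bl.length ∧ IndPath G (b :: l) ∧
        ∀ x ∈ l, ∃ w ∈ ps ++ bl, x ∈ U w := by
  classical
  have hpow : ∀ s ≤ N, θ ≤ δ ^ s := fun s hs =>
    hθδ.trans (pow_le_pow_of_le_one hδ.le hδ₁ hs)
  have h4 : (0 : ℝ) < 4 ^ (2 * bl.length) := by positivity
  induction ps with
  | nil =>
    intro u s X U hlt hN _ hlast hX hXc hU hs
    have hU' : ∀ w ∈ bl, U w ⊆ E w ∧ θ * (E w).card ≤ (U w).card := by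
      intro w hw
      refine ⟨(hU w (by simpa using hw)).1, le_trans ?_ (hU w (by simpa using hw)).2⟩
      gcongr
      exact hpow s (by simpa using hs)
    have hrel : ∀ A z, A ⊆ E z → ∀ w ∈ bl, (Before (E z) (E w) ∧ ∀ b ∈ E z,
        ((nbrsIn G b (E w)).card : ℝ) ≤ θ / 4 ^ (2 * bl.length) * (E w).card) →
        BlueRel G (4 ^ (2 * bl.length)) A (U w) := by
      intro A z hA w hw hzw
      refine ⟨hzw.1.mono hA (hU' w hw).1, fun a ha => ?_⟩
      have h₁ : ((nbrsIn G a (U w)).card : ℝ) ≤ (nbrsIn G a (E w)).card := by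
        exact_mod_cast Finset.card_le_card (nbrsIn_mono a (hU' w hw).1)
      have h₂ := h₁.trans (hzw.2 a (hA ha))
      rw [div_mul_eq_mul_div, le_div_iff₀ h4] at h₂
      have h₃ : (4 : ℝ) ^ (2 * bl.length) * (nbrsIn G a (U w)).card ≤ (U w).card := by
        linarith [(hU' w hw).2]
      exact_mod_cast h₃
    have hNbl : ∀ w ∈ bl, w < N := fun w hw => hN w (by simp [hw])
    have hXt : t ≤ X.card := by
      have : (K : ℝ) ≤ X.card := (hthr u (hN u (by simp))).trans hXc
      exact hG.le.trans (by exact_mod_cast this)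
    obtain ⟨b, hb, l, hl, hpath, hmem⟩ := exists_indPath_of_blueRel hG.noHole hG.launches hG.le
      (p := 2 * bl.length) (X := X) (L := bl.map U) hXt
      (by
        intro S hS
        obtain ⟨w, hw, rfl⟩ := List.mem_map.1 hS
        exact hrel X u hX w hw (hlast u (by simp) w hw))
      (List.pairwise_map.2 (hbl.imp_of_mem fun {a b} ha hb hab =>
        hrel (U a) a (hU' a ha).1 b hb hab))
      (by
        intro S hS
        obtain ⟨w, hw, rfl⟩ := List.mem_map.1 hS
        exact_mod_cast (hsize w (hNbl w hw)).trans (hU' w hw).2)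
      (by simp)
    refine ⟨b, hb, l, by simpa using hl, hpath, fun x hx => ?_⟩
    obtain ⟨S, hS, hxS⟩ := hmem x hx
    obtain ⟨w, hw, rfl⟩ := List.mem_map.1 hS
    exact ⟨w, by simpa using hw, hxS⟩
  | cons v ps ih =>
    intro u s X U hlt hN hch hlast hX hXc hU hs
    have hch' := List.isChain_cons_cons.1 hch
    have hlt' := List.pairwise_cons.1 (show (u :: (v :: ps ++ bl)).Pairwise (· < ·) from hlt)
    have hlt'' := List.pairwise_cons.1 (show (v :: (ps ++ bl)).Pairwise (· < ·) from hlt'.2)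
    have huv : u < v := hlt'.1 v (by simp)
    have huN : u < N := hN u (by simp)
    have hvN : v < N := hN v (by simp)
    have hs' : s + (ps.length + 1) ≤ N := by simpa using hs
    have hθs : ∀ w ∈ v :: ps ++ bl, θ * (E w).card ≤ (U w).card := by
      intro w hw
      refine le_trans ?_ (hU w hw).2
      gcongr
      exact hpow s (by omega)
    set bad : ℕ → Finset (Fin n) := fun w =>
      X.filter fun a => ((nonNbrsIn G a (U w)).card : ℝ) < δ * (U w).card with hbad
    have hbadc : ∀ w ∈ (ps ++ bl).toFinset, ((bad w).card : ℝ) ≤ η * (E u).card := by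
      intro w hw
      rw [List.mem_toFinset] at hw
      have hw' : w ∈ v :: ps ++ bl := by simp only [List.cons_append]; exact List.mem_cons_of_mem _ hw
      by_contra! hc
      have hvw := hlt''.1 w hw
      obtain ⟨a, ha, hac⟩ := hdense u huN w (hN w (List.mem_cons_of_mem _ hw')) (by omega) (bad w)
        ((Finset.filter_subset _ _).trans hX) hc.le (U w) (hU w hw').1 (hθs w hw')
      exact absurd hac (not_le.2 (Finset.mem_filter.1 ha).2)
    set Bad := (ps ++ bl).toFinset.biUnion bad with hBad
    have hBadX : Bad ⊆ X := Finset.biUnion_subset.2 fun w _ => Finset.filter_subset _ _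
    have hBadc : (Bad.card : ℝ) ≤ thr u * (E u).card := by
      have hcN : (ps ++ bl).toFinset.card ≤ N := by
        rw [← Finset.card_range N]
        refine Finset.card_le_card fun w hw => ?_
        rw [List.mem_toFinset] at hw
        exact Finset.mem_range.2 (hN w (List.mem_cons_of_mem _ (List.mem_cons_of_mem _ hw)))
      calc (Bad.card : ℝ) ≤ ∑ w ∈ (ps ++ bl).toFinset, ((bad w).card : ℝ) := by
            exact_mod_cast Finset.card_biUnion_le
        _ ≤ ∑ _w ∈ (ps ++ bl).toFinset, η * (E u).card := Finset.sum_le_sum hbadc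
        _ = (ps ++ bl).toFinset.card * (η * (E u).card) := by
            rw [Finset.sum_const, nsmul_eq_mul]
        _ ≤ N * (η * (E u).card) := by gcongr
        _ = N * η * (E u).card := by ring
        _ ≤ thr u * (E u).card := by gcongr; exact hη u huN
    have hX₀c : thr u * (E u).card ≤ (X \ Bad).card := by
      rw [Finset.card_sdiff_of_subset hBadX, Nat.cast_sub (Finset.card_le_card hBadX)]
      linarith
    obtain ⟨a, ha, hac⟩ := hch'.1.2 (X \ Bad) (Finset.sdiff_subset.trans hX) hX₀c (U v)
      (hU v (by simp)).1 (hθs v (by simp))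
    rw [Finset.mem_sdiff] at ha
    obtain ⟨b, hb, l, hl, hpath, hmem⟩ := ih v (s + 1) (nbrsIn G a (U v))
      (fun w => nonNbrsIn G a (U w)) hlt'.2 (fun w hw => hN w (List.mem_cons_of_mem _ hw)) hch'.2
      (fun z hz => hlast z (by simpa [List.getLast?_cons_cons] using hz))
      ((nbrsIn_subset _ _).trans (hU v (by simp)).1) hac
      (by
        intro w hw
        have hw' : w ∈ v :: ps ++ bl := List.mem_cons_of_mem _ hw
        refine ⟨(nonNbrsIn_subset _ _).trans (hU w hw').1, ?_⟩
        have hnb : a ∉ bad w := fun hab => ha.2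
          (Finset.mem_biUnion.2 ⟨w, List.mem_toFinset.2 hw, hab⟩)
        have hnb' : δ * (U w).card ≤ (nonNbrsIn G a (U w)).card := by
          by_contra! hc
          exact hnb (Finset.mem_filter.2 ⟨ha.1, hc⟩)
        refine le_trans ?_ hnb'
        rw [pow_succ', mul_assoc]
        gcongr
        exact (hU w hw').2)
      (by omega)
    have hb' := mem_nbrsIn.1 hb
    refine ⟨a, ha.1, b :: l, by simp [hl]; omega, ⟨?_, hb'.2, ?_, hpath⟩, ?_⟩
    · exact hch'.1.1 a (hX ha.1) b ((hU v (by simp)).1 hb'.1)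
    · intro x hx
      obtain ⟨w, -, hxw⟩ := hmem x hx
      exact (mem_nonNbrsIn.1 hxw).2
    · intro x hx
      rcases List.mem_cons.1 hx with rfl | hx
      · exact ⟨v, by simp, hb'.1⟩
      · obtain ⟨w, hw, hxw⟩ := hmem x hx
        exact ⟨w, List.mem_cons_of_mem _ hw, (mem_nonNbrsIn.1 hxw).1⟩

open scoped Classical in
/-- The tuples with entries in the given sets, any two of whose entries are related. -/
noncomputable def relTuples {V : Type*} (P : V → V → Prop) {r : ℕ} (W : Fin r → Finset V) :
    Finset (Fin r → V) :=
  (Fintype.piFinset W).filter fun x => ∀ i j, i < j → P (x i) (x j)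

section Density

variable {V : Type*} {P : V → V → Prop} {r : ℕ}

lemma mem_relTuples {W : Fin r → Finset V} {x : Fin r → V} :
    x ∈ relTuples P W ↔ (∀ i, x i ∈ W i) ∧ ∀ i j, i < j → P (x i) (x j) := by
  simp [relTuples]

lemma card_relTuples_le (W : Fin r → Finset V) :
    ((relTuples P W).card : ℝ) ≤ ∏ i, ((W i).card : ℝ) := by
  classical
  have := Finset.card_filter_le (Fintype.piFinset W) fun x => ∀ i j, i < j → P (x i) (x j)
  rw [Fintype.card_piFinset] at this
  unfold relTuples
  exact_mod_cast this

lemma prod_card_update_update {i j : Fin r} (hij : i ≠ j) (W : Fin r → Finset V)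
    (X Y : Finset V) :
    ∏ l, ((Function.update (Function.update W i X) j Y l).card : ℝ) =
      X.card * Y.card * ∏ l ∈ (Finset.univ.erase j).erase i, ((W l).card : ℝ) := by
  rw [← Finset.mul_prod_erase Finset.univ _ (Finset.mem_univ j),
    ← Finset.mul_prod_erase (Finset.univ.erase j) _
      (Finset.mem_erase.2 ⟨hij, Finset.mem_univ i⟩)]
  rw [Function.update_self, Function.update_of_ne hij, Function.update_self,
    ← mul_assoc, mul_comm (Y.card : ℝ)]
  congr 1
  refine Finset.prod_congr rfl fun l hl => ?_
  rw [Finset.mem_erase, Finset.mem_erase] at hl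
  rw [Function.update_of_ne hl.2.1, Function.update_of_ne hl.1]

lemma forall_mem_update_update {i j : Fin r} (hij : i ≠ j) {W : Fin r → Finset V}
    {X Y : Finset V} {x : Fin r → V} (hx : ∀ l, x l ∈ W l) (hX : x i ∈ X) (hY : x j ∈ Y) (l) :
    x l ∈ Function.update (Function.update W i X) j Y l := by
  rcases eq_or_ne l j with rfl | hlj
  · simpa
  rcases eq_or_ne l i with rfl | hli
  · simpa [hij]
  · simpa [hlj, hli] using hx l

lemma mem_of_mem_update_update {i j : Fin r} (hij : i ≠ j) {W : Fin r → Finset V}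
    {X Y : Finset V} {x : Fin r → V}
    (hx : ∀ l, x l ∈ Function.update (Function.update W i X) j Y l) : x i ∈ X ∧ x j ∈ Y := by
  have hi := hx i
  have hj := hx j
  rw [Function.update_of_ne hij, Function.update_self] at hi
  rw [Function.update_self] at hj
  exact ⟨hi, hj⟩

open scoped Classical in
lemma relTuples_update_subset {i j : Fin r} (hij : i < j) {W : Fin r → Finset V}
    {X Y : Finset V} (hX : X ⊆ W i) (hY : Y ⊆ W j) :
    relTuples P (Function.update (Function.update W i X) j Y) ⊆ X.biUnion fun a =>
      Fintype.piFinset (Function.update (Function.update W i {a}) j (Y.filter (P a))) := by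
  intro x hx
  obtain ⟨hx, hxP⟩ := mem_relTuples.1 hx
  obtain ⟨hxi, hxj⟩ := mem_of_mem_update_update hij.ne hx
  refine Finset.mem_biUnion.2 ⟨x i, hxi, Fintype.mem_piFinset.2 ?_⟩
  refine forall_mem_update_update hij.ne (fun l => ?_) (Finset.mem_singleton_self _)
    (Finset.mem_filter.2 ⟨hxj, hxP i j hij⟩)
  have := hx l
  rcases eq_or_ne l j with rfl | hlj
  · exact hY hxj
  rcases eq_or_ne l i with rfl | hli
  · exact hX hxi
  · simpa [hlj, hli] using this

open scoped Classical in
lemma card_relTuples_le_of_sparse {i j : Fin r} (hij : i < j) {W : Fin r → Finset V}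
    {X Y : Finset V} {δ : ℝ}
    (h : ∀ a ∈ X, ((Y.filter (P a)).card : ℝ) ≤ δ * Y.card) (hX : X ⊆ W i) (hY : Y ⊆ W j) :
    ((relTuples P (Function.update (Function.update W i X) j Y)).card : ℝ) ≤
      δ * (X.card * Y.card * ∏ l ∈ (Finset.univ.erase j).erase i, ((W l).card : ℝ)) := by
  have hR : (0 : ℝ) ≤ ∏ l ∈ (Finset.univ.erase j).erase i, ((W l).card : ℝ) :=
    Finset.prod_nonneg fun _ _ => Nat.cast_nonneg _
  have hcard := (Finset.card_le_card (relTuples_update_subset (P := P) hij hX hY)).trans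
    (Finset.card_biUnion_le (s := X))
  have hcard' : ((relTuples P (Function.update (Function.update W i X) j Y)).card : ℝ) ≤
      ∑ a ∈ X, ((Fintype.piFinset
        (Function.update (Function.update W i {a}) j (Y.filter (P a)))).card : ℝ) := by
    rw [← Nat.cast_sum]
    exact Nat.cast_le.2 hcard
  refine hcard'.trans ?_
  have hsum : ∀ a ∈ X, ((Fintype.piFinset
      (Function.update (Function.update W i {a}) j (Y.filter (P a)))).card : ℝ) ≤
      δ * Y.card * ∏ l ∈ (Finset.univ.erase j).erase i, ((W l).card : ℝ) := by
    intro a ha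
    rw [Fintype.card_piFinset, Nat.cast_prod, prod_card_update_update hij.ne,
      Finset.card_singleton, Nat.cast_one, one_mul]
    exact mul_le_mul_of_nonneg_right (h a ha) hR
  refine (Finset.sum_le_sum hsum).trans (le_of_eq ?_)
  rw [Finset.sum_const, nsmul_eq_mul]
  ring

open scoped Classical in
lemma card_relTuples_le_add {i j : Fin r} (hij : i ≠ j) {W : Fin r → Finset V}
    (X Y : Finset V) :
    ((relTuples P W).card : ℝ) ≤
      (relTuples P (Function.update (Function.update W i (W i \ X)) j (W j))).card +
      (relTuples P (Function.update (Function.update W i X) j (W j \ Y))).card +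
      (relTuples P (Function.update (Function.update W i X) j Y)).card := by
  have hsub : relTuples P W ⊆
      relTuples P (Function.update (Function.update W i (W i \ X)) j (W j)) ∪
      relTuples P (Function.update (Function.update W i X) j (W j \ Y)) ∪
      relTuples P (Function.update (Function.update W i X) j Y) := by
    intro x hx
    obtain ⟨hx, hxP⟩ := mem_relTuples.1 hx
    rw [Finset.mem_union, Finset.mem_union]
    by_cases hX : x i ∈ X
    · by_cases hY : x j ∈ Y
      · exact .inr (mem_relTuples.2 ⟨forall_mem_update_update hij hx hX hY, hxP⟩)
      · exact .inl (.inr (mem_relTuples.2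
          ⟨forall_mem_update_update hij hx hX (Finset.mem_sdiff.2 ⟨hx j, hY⟩), hxP⟩))
    · exact .inl (.inl (mem_relTuples.2
        ⟨forall_mem_update_update hij hx (Finset.mem_sdiff.2 ⟨hx i, hX⟩) (hx j), hxP⟩))
  have h₁ := Finset.card_le_card hsub
  have h₂ := h₁.trans (Finset.card_union_le _ _)
  have h₃ := h₂.trans (Nat.add_le_add_right (Finset.card_union_le _ _) _)
  exact_mod_cast h₃

/-- Any large parts of two of the sets contain a vertex related to a positive fraction. -/
def Hereditary (P : V → V → Prop) (η δ : ℝ) (W : Fin r → Finset V) : Prop :=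
  ∀ i j, i < j → ∀ X ⊆ W i, η * (W i).card ≤ X.card → ∀ Y ⊆ W j, η * (W j).card ≤ Y.card →
    ∃ a ∈ X, ∃ Z ⊆ Y, (∀ y ∈ Z, P a y) ∧ δ * Y.card ≤ Z.card

lemma exists_increment {ε η d : ℝ} (hε : 0 < ε) (hε₁ : ε ≤ 1) (hη : 0 < η) (hη₁ : η ≤ 1)
    (hd : ε ≤ d) {W : Fin r → Finset V} (hW : ∀ i, 0 < (W i).card)
    (hN : d * ∏ i, ((W i).card : ℝ) ≤ (relTuples P W).card)
    (hfail : ¬ Hereditary P η (ε / 2) W) :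
    ∃ W' : Fin r → Finset V, (∀ i, W' i ⊆ W i ∧ ε * η ^ 2 / 16 * (W i).card ≤ (W' i).card) ∧
      d * (1 + η ^ 2 / 4) * ∏ i, ((W' i).card : ℝ) ≤ (relTuples P W').card := by
  classical
  unfold Hereditary at hfail
  push Not at hfail
  obtain ⟨i, j, hij, X, hX, hXc, Y, hY, hYc, hs⟩ := hfail
  have hprod : ∏ l, ((W l).card : ℝ) = (W i).card * (W j).card *
      ∏ l ∈ (Finset.univ.erase j).erase i, ((W l).card : ℝ) := by
    rw [← prod_card_update_update hij.ne]
    simp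
  have hS := card_relTuples_le_of_sparse (P := P) hij (fun a ha =>
    (hs a ha (Y.filter (P a)) (Finset.filter_subset _ _)
      fun y hy => (Finset.mem_filter.1 hy).2).le) hX hY
  have hadd := card_relTuples_le_add (P := P) (W := W) hij.ne X Y
  have hP₁ := prod_card_update_update hij.ne W (W i \ X) (W j)
  have hP₂ := prod_card_update_update hij.ne W X (W j \ Y)
  have hc₁ := card_relTuples_le (P := P) (Function.update (Function.update W i (W i \ X)) j (W j))
  have hc₂ := card_relTuples_le (P := P) (Function.update (Function.update W i X) j (W j \ Y))
  have hR : 0 < ∏ l ∈ (Finset.univ.erase j).erase i, ((W l).card : ℝ) :=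
    Finset.prod_pos fun l _ => by exact_mod_cast hW l
  have hXs : ((W i \ X).card : ℝ) = (W i).card - X.card := by
    rw [Finset.card_sdiff_of_subset hX, Nat.cast_sub (Finset.card_le_card hX)]
  have hYs : ((W j \ Y).card : ℝ) = (W j).card - Y.card := by
    rw [Finset.card_sdiff_of_subset hY, Nat.cast_sub (Finset.card_le_card hY)]
  have hκ : ε * η ^ 2 / 16 ≤ η := by nlinarith [mul_pos hε hη]
  have hκ₁ : ε * η ^ 2 / 16 ≤ 1 := hκ.trans hη₁
  have hwi : (0 : ℝ) < (W i).card := by exact_mod_cast hW i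
  have hwj : (0 : ℝ) < (W j).card := by exact_mod_cast hW j
  have hself : ∀ l, ε * η ^ 2 / 16 * (W l).card ≤ (W l).card := fun l =>
    mul_le_of_le_one_left (Nat.cast_nonneg _) hκ₁
  have hXl : (X.card : ℝ) ≤ (W i).card := by exact_mod_cast Finset.card_le_card hX
  have hYl : (Y.card : ℝ) ≤ (W j).card := by exact_mod_cast Finset.card_le_card hY
  have hupd : ∀ X' Y' : Finset V, X' ⊆ W i → Y' ⊆ W j →
      ε * η ^ 2 / 16 * (W i).card ≤ X'.card → ε * η ^ 2 / 16 * (W j).card ≤ Y'.card → ∀ l,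
      Function.update (Function.update W i X') j Y' l ⊆ W l ∧ ε * η ^ 2 / 16 * (W l).card ≤
        (Function.update (Function.update W i X') j Y' l).card := by
    intro X' Y' hX' hY' hX'c hY'c l
    rcases eq_or_ne l j with rfl | hlj
    · simpa using ⟨hY', hY'c⟩
    rcases eq_or_ne l i with rfl | hli
    · simpa [hij.ne] using ⟨hX', hX'c⟩
    · simpa [hlj, hli] using hself l
  rw [hP₁, hXs] at hc₁
  rw [hP₂, hYs] at hc₂
  rw [hprod] at hN
  by_contra! hno
  have hno₁ := hno (Function.update (Function.update W i (W i \ X)) j (W j))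
  have hno₂ := hno (Function.update (Function.update W i X) j (W j \ Y))
  rw [hP₁, hXs] at hno₁
  rw [hP₂, hYs] at hno₂
  have hu₁ := hupd (W i \ X) (W j) Finset.sdiff_subset subset_rfl
  have hu₂ := hupd X (W j \ Y) hX Finset.sdiff_subset
  rw [hXs] at hu₁
  rw [hYs] at hu₂
  generalize (∏ l ∈ (Finset.univ.erase j).erase i, ((W l).card : ℝ)) = R at *
  generalize ((relTuples P (Function.update (Function.update W i (W i \ X)) j (W j))).card : ℝ)
    = N₁ at *
  generalize ((relTuples P (Function.update (Function.update W i X) j (W j \ Y))).card : ℝ)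
    = N₂ at *
  generalize ((relTuples P (Function.update (Function.update W i X) j Y)).card : ℝ) = N₃ at *
  generalize ((relTuples P W).card : ℝ) = N₀ at *
  have hself_i := hself i
  have hself_j := hself j
  generalize ((W i).card : ℝ) = w at *
  generalize ((W j).card : ℝ) = v at *
  generalize (X.card : ℝ) = x at *
  generalize (Y.card : ℝ) = y at *
  have hx₀ : 0 < x := (mul_pos hη hwi).trans_le hXc
  have hy₀ : 0 < y := (mul_pos hη hwj).trans_le hYc
  have hd₀ : 0 < d := hε.trans_le hd
  have hwvR : 0 < w * v * R := by positivity
  have hdc : 0 ≤ d * (1 + η ^ 2 / 4) := by positivity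
  have hκ₀ : 0 < ε * η ^ 2 / 16 := by positivity
  have h₁ : N₁ ≤ d * (1 + η ^ 2 / 4) * ((w - x) * v * R) + ε * η ^ 2 / 16 * (w * v * R) := by
    by_cases hb : ε * η ^ 2 / 16 * w ≤ w - x
    · exact (hno₁ (hu₁ hb hself_j)).le.trans (by linarith [mul_pos hκ₀ hwvR])
    · have : (w - x) * (v * R) ≤ ε * η ^ 2 / 16 * w * (v * R) := by
        gcongr
        exact (not_le.1 hb).le
      have h0 : 0 ≤ d * (1 + η ^ 2 / 4) * ((w - x) * v * R) :=
        mul_nonneg hdc (mul_nonneg (mul_nonneg (by linarith) hwj.le) hR.le)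
      linarith
  have h₂ : N₂ ≤ d * (1 + η ^ 2 / 4) * (x * (v - y) * R) + ε * η ^ 2 / 16 * (w * v * R) := by
    by_cases hb : ε * η ^ 2 / 16 * v ≤ v - y
    · refine (hno₂ (hu₂ ?_ hb)).le.trans (by linarith [mul_pos hκ₀ hwvR])
      exact le_trans (by gcongr) hXc
    · have h3 : x * (v - y) ≤ w * (ε * η ^ 2 / 16 * v) :=
        mul_le_mul hXl (not_le.1 hb).le (by linarith) hwi.le
      have := mul_le_mul_of_nonneg_right h3 hR.le
      have h0 : 0 ≤ d * (1 + η ^ 2 / 4) * (x * (v - y) * R) :=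
        mul_nonneg hdc (mul_nonneg (mul_nonneg hx₀.le (by linarith)) hR.le)
      linarith
  have hxyR : 0 < x * y * R := by positivity
  have h₃ : N₃ ≤ d / 2 * (x * y * R) := hS.trans (by gcongr)
  have hxy : η ^ 2 * (w * v * R) ≤ x * y * R := by
    have : (η * w) * (η * v) ≤ x * y := mul_le_mul hXc hYc (by positivity) hx₀.le
    have := mul_le_mul_of_nonneg_right this hR.le
    linarith
  have h₄ : d * (η ^ 2 * (w * v * R)) ≤ d * (x * y * R) := by gcongr
  have h₅ : ε * (η ^ 2 * (w * v * R)) ≤ d * (η ^ 2 * (w * v * R)) := by gcongr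
  have h₆ : 0 < ε * (η ^ 2 * (w * v * R)) := by positivity
  have h₇ : 0 ≤ d * η ^ 2 * (x * y * R) := by positivity
  linarith

lemma exists_hereditary {ε η : ℝ} (hε : 0 < ε) (hε₁ : ε ≤ 1) (hη : 0 < η) (hη₁ : η ≤ 1)
    (m : ℕ) : ∀ d, ε ≤ d → 1 < d * (1 + η ^ 2 / 4) ^ m → ∀ W : Fin r → Finset V,
      (∀ i, 0 < (W i).card) → d * ∏ i, ((W i).card : ℝ) ≤ (relTuples P W).card →
      ∃ W' : Fin r → Finset V, (∀ i, (ε * η ^ 2 / 16) ^ m * (W i).card ≤ (W' i).card) ∧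
        Hereditary P η (ε / 2) W' := by
  have hκ₁ : ε * η ^ 2 / 16 ≤ 1 := by nlinarith [mul_pos hε hη]
  have hκ₀ : 0 < ε * η ^ 2 / 16 := by positivity
  induction m with
  | zero =>
    intro d _ hd W hW hN
    have hP : 0 < ∏ i, ((W i).card : ℝ) := Finset.prod_pos fun i _ => by exact_mod_cast hW i
    have := hN.trans (card_relTuples_le W)
    rw [pow_zero, mul_one] at hd
    nlinarith
  | succ m ih =>
    intro d hd hdm W hW hN
    by_cases hH : Hereditary P η (ε / 2) W
    · exact ⟨W, fun i => mul_le_of_le_one_left (Nat.cast_nonneg _)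
        (pow_le_one₀ hκ₀.le hκ₁), hH⟩
    · obtain ⟨W₁, hW₁, hN₁⟩ := exists_increment hε hε₁ hη hη₁ hd hW hN hH
      have hpos : ∀ i, 0 < (W₁ i).card := fun i => by
        have h₁ : (0 : ℝ) < (W i).card := by exact_mod_cast hW i
        exact_mod_cast (mul_pos hκ₀ h₁).trans_le (hW₁ i).2
      obtain ⟨W', hW', hH'⟩ := ih (d * (1 + η ^ 2 / 4))
        (hd.trans (le_mul_of_one_le_right (hε.le.trans hd) (by nlinarith [sq_nonneg η])))
        (by rwa [mul_assoc, ← pow_succ']) W₁ hpos hN₁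
      refine ⟨W', fun i => le_trans ?_ (hW' i), hH'⟩
      rw [pow_succ, mul_assoc]
      gcongr
      exact (hW₁ i).2

end Density

lemma cliqueCount_compl_le {n : ℕ} (G : SimpleGraph (Fin n)) (r : ℕ) :
    cliqueCount Gᶜ r ≤
      (relTuples (fun a b => a < b ∧ ¬ G.Adj a b) fun _ : Fin r => Finset.univ).card := by
  classical
  unfold cliqueCount
  set T := relTuples (fun a b => a < b ∧ ¬ G.Adj a b) fun _ : Fin r => Finset.univ
  refine (Set.ncard_le_ncard (t := (T.image fun x => Finset.univ.image x : Finset (Finset _)))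
    ?_ (Finset.finite_toSet _)).trans ?_
  · rintro s ⟨hs, hcl⟩
    rw [Finset.mem_coe, Finset.mem_image]
    refine ⟨s.orderEmbOfFin hs, mem_relTuples.2 ⟨fun _ => Finset.mem_univ _, fun i j hij => ?_⟩,
      Finset.image_orderEmbOfFin_univ s hs⟩
    have hlt := (s.orderEmbOfFin hs).strictMono hij
    refine ⟨hlt, ?_⟩
    have := hcl (s.orderEmbOfFin_mem hs i) (s.orderEmbOfFin_mem hs j) hlt.ne
    exact ((SimpleGraph.compl_adj _ _ _).1 this).2
  · rw [Set.ncard_coe_finset]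
    exact Finset.card_image_le

lemma exists_middle {n : ℕ} (W : Finset (Fin n)) (hW : 4 ≤ W.card) :
    ∃ F ⊆ W, ∃ B ⊆ W, ∃ L ⊆ W, W.card ≤ 8 * F.card ∧ W.card ≤ 2 * B.card ∧
      W.card ≤ 8 * L.card ∧ Before F B ∧ Before B L := by
  classical
  obtain ⟨F, hF, hFc, hFb⟩ := exists_initial_segment W (show W.card / 4 ≤ W.card by omega)
  have hc : (W \ F).card = W.card - W.card / 4 := by
    rw [Finset.card_sdiff_of_subset hF, hFc]
  obtain ⟨B, hB, hBc, hBL⟩ := exists_initial_segment (W \ F)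
    (show W.card - 2 * (W.card / 4) ≤ (W \ F).card by omega)
  have hc' : ((W \ F) \ B).card = W.card / 4 := by
    rw [Finset.card_sdiff_of_subset hB, hBc]
    omega
  exact ⟨F, hF, B, hB.trans Finset.sdiff_subset, (W \ F) \ B,
    Finset.sdiff_subset.trans Finset.sdiff_subset, by omega, by omega, by omega,
    hFb.mono subset_rfl hB, hBL⟩

lemma exists_ordered_hereditary {ε η : ℝ} (hε : 0 < ε) (hε₁ : ε ≤ 1) (hη : 0 < η) (r : ℕ) :
    ∃ ρ : ℝ, 0 < ρ ∧ ∃ n₀ : ℕ, ∀ n ≥ n₀, ∀ G : SimpleGraph (Fin n),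
      ε * (n : ℝ) ^ r ≤ cliqueCount Gᶜ r → ∃ B : ℕ → Finset (Fin n),
        (∀ i < r, ρ * n ≤ (B i).card) ∧ ∀ i j, i < j → j < r → Before (B i) (B j) ∧
          ∀ X ⊆ B i, η * (B i).card ≤ X.card → ∀ Y ⊆ B j, η * (B j).card ≤ Y.card →
            ∃ a ∈ X, ε / 2 * Y.card ≤ (nonNbrsIn G a Y).card := by
  classical
  set η' : ℝ := min (η / 2) (1 / 8) with hη'
  have hη'₀ : 0 < η' := by positivity
  have hη'₁ : η' ≤ η / 2 := min_le_left _ _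
  have hη'₂ : η' ≤ 1 / 8 := min_le_right _ _
  obtain ⟨m, hm⟩ := pow_unbounded_of_one_lt (1 / ε)
    (show (1 : ℝ) < 1 + η' ^ 2 / 4 by linarith [show 0 < η' ^ 2 / 4 by positivity])
  rw [div_lt_iff₀ hε, mul_comm] at hm
  set κ := (ε * η' ^ 2 / 16) ^ m with hκ
  have hκ₀ : 0 < κ := by positivity
  obtain ⟨n₀, hn₀⟩ := exists_nat_ge (4 / κ)
  refine ⟨κ / 2, by positivity, max n₀ 1, fun n hn G hG => ?_⟩
  have hnκ : 4 ≤ κ * n := by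
    have : (n₀ : ℝ) ≤ n := by exact_mod_cast (le_max_left _ _).trans hn
    rw [div_le_iff₀ hκ₀] at hn₀
    nlinarith
  have hn₁ : 0 < n := (le_max_right _ _).trans hn
  obtain ⟨W, hWc, hH⟩ := exists_hereditary hε hε₁ hη'₀ (hη'₂.trans (by norm_num)) m ε le_rfl hm
    (P := fun a b => a < b ∧ ¬ G.Adj a b) (fun _ : Fin r => Finset.univ)
    (fun _ => by simpa using hn₁)
    (by
      simp only [Finset.card_univ, Fintype.card_fin, Finset.prod_const]
      exact hG.trans (by exact_mod_cast cliqueCount_compl_le G r))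
  simp only [Finset.card_univ, Fintype.card_fin] at hWc
  have hW4 : ∀ i, 4 ≤ (W i).card := fun i => by exact_mod_cast hnκ.trans (hWc i)
  choose F hF B hB L hL hFc hBc hLc hFB hBL using fun i => exists_middle (W i) (hW4 i)
  have hsmall : ∀ i (S : Finset (Fin n)), (W i).card ≤ 8 * S.card → η' * (W i).card ≤ S.card := by
    intro i S hS
    have hS' : ((W i).card : ℝ) ≤ 8 * S.card := by exact_mod_cast hS
    nlinarith [(Nat.cast_nonneg (W i).card : (0 : ℝ) ≤ _)]
  have hlarge : ∀ i (X : Finset (Fin n)), η * (B i).card ≤ X.card →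
      η' * (W i).card ≤ X.card := by
    intro i X hX
    have hS' : ((W i).card : ℝ) ≤ 2 * (B i).card := by exact_mod_cast hBc i
    refine le_trans ?_ hX
    calc η' * (W i).card ≤ η / 2 * (2 * (B i).card) := by gcongr
      _ = _ := by ring
  refine ⟨fun l => if h : l < r then B ⟨l, h⟩ else ∅, fun i hi => ?_, fun i j hij hj => ?_⟩
  · beta_reduce
    rw [dif_pos hi]
    have hS' : ((W ⟨i, hi⟩).card : ℝ) ≤ 2 * (B ⟨i, hi⟩).card := by exact_mod_cast hBc _
    linarith [hWc ⟨i, hi⟩]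
  · have hi := hij.trans hj
    beta_reduce
    rw [dif_pos hi, dif_pos hj]
    have hij' : (⟨i, hi⟩ : Fin r) < ⟨j, hj⟩ := hij
    constructor
    · obtain ⟨a, ha, Z, hZ, hZP, hac⟩ := hH _ _ hij' _ (hL _) (hsmall _ _ (hLc _)) _ (hF _)
        (hsmall _ _ (hFc _))
      have hFpos : (0 : ℝ) < (F ⟨j, hj⟩).card := by
        have := hFc ⟨j, hj⟩
        have := hW4 ⟨j, hj⟩
        exact_mod_cast (by omega : 0 < (F ⟨j, hj⟩).card)
      have hpos := (by positivity : 0 < ε / 2 * ((F ⟨j, hj⟩).card : ℝ)).trans_le hac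
      obtain ⟨y, hy⟩ := Finset.card_pos.1 (Nat.cast_pos.1 hpos)
      have hay := (hZP y hy).1
      have hyF := hZ hy
      exact fun b hb b' hb' =>
        ((hBL _ b hb a ha).trans hay).trans (hFB _ y hyF b' hb')
    · intro X hX hXc Y hY hYc
      obtain ⟨a, ha, Z, hZ, hZP, hac⟩ := hH _ _ hij' X (hX.trans (hB _)) (hlarge _ X hXc) Y
        (hY.trans (hB _)) (hlarge _ Y hYc)
      refine ⟨a, ha, hac.trans ?_⟩
      refine Nat.cast_le.2 (Finset.card_le_card fun y hy => ?_)
      exact mem_nonNbrsIn.2 ⟨hZ hy, (hZP y hy).2⟩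

lemma noHole_of_not_containsBlowup {n t : ℕ} {G : SimpleGraph (Fin n)}
    (h : ¬ ContainsBlowup Gᶜ 2 t) : NoHole G t := by
  classical
  intro A B hA hB hAB
  by_contra! hno
  obtain ⟨A', hA', hA'c⟩ := Finset.exists_subset_card_eq hA
  obtain ⟨B', hB', hB'c⟩ := Finset.exists_subset_card_eq hB
  have hadj : ∀ x ∈ A', ∀ y ∈ B', Gᶜ.Adj x y := fun x hx y hy =>
    (SimpleGraph.compl_adj _ _ _).2
      ⟨(hAB x (hA' hx) y (hB' hy)).ne, hno x (hA' hx) y (hB' hy)⟩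
  have hdisj : Disjoint A' B' := Finset.disjoint_left.2 fun x hx hx' => (hadj x hx x hx').ne rfl
  refine h ⟨![A', B'], fun i => ?_, fun i j hij => ?_, fun i j hij => ?_⟩
  · fin_cases i
    · exact hA'c
    · exact hB'c
  · fin_cases i <;> fin_cases j
    · exact absurd rfl hij
    · exact hdisj
    · exact hdisj.symm
    · exact absurd rfl hij
  · fin_cases i <;> fin_cases j
    · exact absurd rfl hij
    · exact hadj
    · exact fun x hx y hy => (hadj y hy x hx).symm
    · exact absurd rfl hij

lemma exists_pos_forall_lt_le {f : ℕ → ℝ} (hf : ∀ u, 0 < f u) (N : ℕ) :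
    ∃ τ : ℝ, 0 < τ ∧ ∀ u < N, τ ≤ f u := by
  induction N with
  | zero => exact ⟨1, one_pos, by simp⟩
  | succ N ih =>
    obtain ⟨τ, hτ, h⟩ := ih
    refine ⟨min τ (f N), lt_min hτ (hf N), fun u hu => ?_⟩
    rcases Nat.lt_succ_iff_lt_or_eq.1 hu with hu | rfl
    · exact (min_le_left _ _).trans (h u hu)
    · exact min_le_right _ _

/-- The list of indices `2 * i, 2 * i + 1` for `i` in the given list. -/
def doubled (c : List ℕ) : List ℕ :=
  c.flatMap fun i => [2 * i, 2 * i + 1]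

@[simp] lemma doubled_cons (i : ℕ) (c : List ℕ) :
    doubled (i :: c) = 2 * i :: (2 * i + 1) :: doubled c := by
  simp [doubled]

lemma div_two_mem_of_mem_doubled {c : List ℕ} {x : ℕ} (hx : x ∈ doubled c) : x / 2 ∈ c := by
  obtain ⟨i, hi, hx⟩ := List.mem_flatMap.1 hx
  simp only [List.mem_cons, List.not_mem_nil, or_false] at hx
  rwa [show x / 2 = i by omega]

lemma length_doubled (c : List ℕ) : (doubled c).length = 2 * c.length := by
  induction c with
  | nil => rfl
  | cons i c ih =>
    simp only [doubled_cons, List.length_cons, ih]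
    omega

lemma getLast?_doubled {c : List ℕ} {z : ℕ} (h : c.getLast? = some z) :
    (doubled c).getLast? = some (2 * z + 1) := by
  induction c with
  | nil => simp at h
  | cons i c ih =>
    obtain _ | ⟨j, c⟩ := c
    · have : i = z := by simpa using h
      simp [this, doubled]
    · rw [List.getLast?_cons_cons] at h
      rw [doubled_cons, doubled_cons, List.getLast?_cons_cons, List.getLast?_cons_cons,
        ← doubled_cons]
      exact ih h

lemma pairwise_lt_doubled_append {c bl : List ℕ} (h : (c ++ bl).Pairwise (· < ·)) :
    (doubled c ++ bl.map (2 * ·)).Pairwise (· < ·) := by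
  induction c with
  | nil => exact List.pairwise_map.2 (List.Pairwise.imp (fun h => by omega) h)
  | cons i c ih =>
    obtain ⟨hi, h⟩ := List.pairwise_cons.1 (show (i :: (c ++ bl)).Pairwise (· < ·) from h)
    have hlt : ∀ x ∈ doubled c ++ bl.map (2 * ·), 2 * i + 1 < x := by
      intro x hx
      rcases List.mem_append.1 hx with hx | hx
      · have := hi _ (List.mem_append_left _ (div_two_mem_of_mem_doubled hx))
        omega
      · obtain ⟨y, hy, rfl⟩ := List.mem_map.1 hx
        have := hi _ (List.mem_append_right _ hy)
        omega
    rw [doubled_cons, List.cons_append, List.cons_append]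
    refine List.pairwise_cons.2 ⟨fun x hx => ?_, List.pairwise_cons.2 ⟨hlt, ih h⟩⟩
    rcases List.mem_cons.1 hx with rfl | hx
    · omega
    · exact (Nat.lt_succ_self _).trans (hlt x hx)

lemma isChain_doubled {red S : ℕ → ℕ → Prop} (hS : ∀ i j, red i j → S (2 * i + 1) (2 * j))
    {c : List ℕ} (h : c.IsChain red) (hc : ∀ i ∈ c, S (2 * i) (2 * i + 1)) :
    (doubled c).IsChain S := by
  induction c with
  | nil => exact List.isChain_nil
  | cons i c ih =>
    obtain _ | ⟨j, c⟩ := c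
    · simpa [doubled] using hc i (by simp)
    · have h' := List.isChain_cons_cons.1 h
      have := ih h'.2 fun i hi => hc i (List.mem_cons_of_mem _ hi)
      rw [doubled_cons] at this ⊢
      rw [doubled_cons]
      exact List.IsChain.cons_cons (hc i (by simp)) (List.IsChain.cons_cons (hS _ _ h'.1) this)

set_option maxHeartbeats 1000000 in
lemma exists_lt_of_pathFree {k : ℕ} (hk : 1 ≤ k) {ε : ℝ} (hε : 0 < ε) (hε₁ : ε ≤ 1) :
    ∃ c₁ : ℝ, 0 < c₁ ∧ ∃ n₀ : ℕ, ∀ n ≥ n₀, ∀ (G : SimpleGraph (Fin n)) (t K : ℕ),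
      PathFree G k t K →
      ε * (n : ℝ) ^ (k.choose 2 + 1) ≤ cliqueCount Gᶜ (k.choose 2 + 1) → c₁ * n < K := by
  set R := k.choose 2 + 1 with hR
  set N := 2 * R with hN
  set δ := ε / 2 with hδ
  have hδ₀ : 0 < δ := by positivity
  have hδ₁ : δ ≤ 1 := by linarith
  set θ := δ ^ N with hθ
  have hθ₀ : 0 < θ := by positivity
  have hθ₁ : θ ≤ 1 := pow_le_one₀ hδ₀.le hδ₁
  obtain ⟨ρ, C₀, h, d, hρ, hρ₁, hh, hd, hcl⟩ := exists_red_blue_clusters k R hθ₀ hθ₁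
    (show 0 < θ / 4 ^ (2 * k) by positivity) R le_rfl
  set thr : ℕ → ℝ := fun u => if u % 2 = 0 then h (u / 2) else d (u / 2) with hthr
  have hthr₀ : ∀ u, 0 < thr u := fun u => by
    simp only [hthr]
    split_ifs
    exacts [(hh _).1, hd _]
  obtain ⟨τ, hτ, hτthr⟩ := exists_pos_forall_lt_le hthr₀ N
  have hN₀ : (0 : ℝ) < N := by
    exact_mod_cast (by omega : 0 < N)
  set η := τ / N with hη
  have hη₀ : 0 < η := by positivity
  obtain ⟨ρ', hρ', n₀, hB⟩ := exists_ordered_hereditary hε hε₁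
    (show 0 < min (η * ρ) (θ * ρ) by positivity) R
  set c₁ := min (ρ' / (|C₀| + 1)) (min (θ * (ρ * ρ') / (4 ^ (2 * k) * 3)) (2 * τ * (ρ * ρ')))
    with hc₁
  refine ⟨c₁, by positivity, n₀, fun n hn G t K hG hcount => ?_⟩
  by_contra! hK
  have hn' : (0 : ℝ) ≤ n := Nat.cast_nonneg n
  have hK₁ : C₀ * K ≤ ρ' * n := by
    have h₁ : (K : ℝ) ≤ ρ' / (|C₀| + 1) * n :=
      hK.trans (mul_le_mul_of_nonneg_right (min_le_left _ _) hn')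
    rw [div_mul_eq_mul_div, le_div_iff₀ (by positivity)] at h₁
    have h₂ : C₀ * K ≤ |C₀| * K := mul_le_mul_of_nonneg_right (le_abs_self _) (Nat.cast_nonneg _)
    linarith [(Nat.cast_nonneg K : (0 : ℝ) ≤ K)]
  have hK₂ : 4 ^ (2 * k) * (3 * K) ≤ θ * (ρ * (ρ' * n)) := by
    have h₁ : (K : ℝ) ≤ θ * (ρ * ρ') / (4 ^ (2 * k) * 3) * n :=
      hK.trans (mul_le_mul_of_nonneg_right ((min_le_right _ _).trans (min_le_left _ _)) hn')
    rw [div_mul_eq_mul_div, le_div_iff₀ (by positivity)] at h₁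
    linarith
  have hK₃ : K ≤ 2 * τ * (ρ * (ρ' * n)) := by
    have h₁ : (K : ℝ) ≤ 2 * τ * (ρ * ρ') * n :=
      hK.trans (mul_le_mul_of_nonneg_right ((min_le_right _ _).trans (min_le_right _ _)) hn')
    linarith
  obtain ⟨B, hBc, hBB⟩ := hB n hn G hcount
  obtain ⟨C, D, hC, hD, hCD⟩ := hcl n t K G hG B fun l hl => hK₁.trans (hBc l hl)
  set E : ℕ → Finset (Fin n) := fun u => if u % 2 = 0 then C (u / 2) else D (u / 2) with hE
  have hE₀ : ∀ i, E (2 * i) = C i := fun i => by simp [hE]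
  have hE₁ : ∀ i, E (2 * i + 1) = D i := fun i => by
    simp only [hE]
    rw [if_neg (by omega), show (2 * i + 1) / 2 = i by omega]
  have ht₀ : ∀ i, thr (2 * i) = h i := fun i => by simp [hthr]
  have ht₁ : ∀ i, thr (2 * i + 1) = d i := fun i => by
    simp only [hthr]
    rw [if_neg (by omega), show (2 * i + 1) / 2 = i by omega]
  have hEB : ∀ u < N, E u ⊆ B (u / 2) ∧ ρ * (B (u / 2)).card ≤ (E u).card := by
    intro u hu
    have hu' : u / 2 < R := by omega
    simp only [hE]
    split_ifs
    exacts [hC _ hu', ⟨(hD _ hu').1, (hD _ hu').2.1⟩]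
  have hEc : ∀ u < N, ρ * (ρ' * n) ≤ (E u).card := fun u hu =>
    le_trans (by gcongr; exact hBc _ (by omega)) (hEB u hu).2
  have hbefore : ∀ i l, i < l → l < R → Before (C i) (C l) ∧ Before (D i) (C l) := by
    intro i l hil hl
    have hB' := (hBB i l hil hl).1
    exact ⟨hB'.mono (hC i (hil.trans hl)).1 (hC l hl).1,
      hB'.mono (hD i (hil.trans hl)).1 (hC l hl).1⟩
  set red : ℕ → ℕ → Prop := fun i l =>
    Before (D i) (C l) ∧ Red G (D i) (C l) (d i) θ (2 * h l) with hred
  obtain ⟨c, bl, hmem, hlt, hch, ⟨z, hz, hzbl⟩, hlen⟩ :=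
    exists_red_chain_blue_tail red hk (Finset.range R) (by simp [hR])
  have hmem' : ∀ x ∈ c ++ bl, x < R := fun x hx => Finset.mem_range.1 (hmem x hx)
  have hzc : z ∈ c := List.mem_of_getLast? hz
  have hzlt : ∀ w ∈ bl, z < w := fun w hw => (List.pairwise_append.1 hlt).2.2 z hzc w hw
  have hpow : θ / 4 ^ (2 * k) ≤ θ / 4 ^ (2 * bl.length) := by
    gcongr
    · norm_num
    · omega
  have hdeg : ∀ i l, i < l → l < R → ¬ red i l → ∀ b ∈ C i ∪ D i,
      ((nbrsIn G b (C l)).card : ℝ) ≤ θ / 4 ^ (2 * bl.length) * (C l).card := by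
    intro i l hil hl hnr b hb
    rcases hCD i (hil.trans hl) l hil hl with hr | hr
    · exact absurd ⟨(hbefore i l hil hl).2, hr⟩ hnr
    · exact (hr b hb).trans (by gcongr)
  obtain ⟨i₀, c, rfl⟩ : ∃ i₀ c', c = i₀ :: c' := by
    obtain _ | ⟨i₀, c⟩ := c
    · simp at hz
    · exact ⟨_, _, rfl⟩
  have hcR : (i₀ :: c).length ≤ R := by
    have hnd : (i₀ :: c).Nodup := ((List.pairwise_append.1 hlt).1).imp fun h => h.ne
    rw [← List.toFinset_card_of_nodup hnd, ← Finset.card_range R]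
    exact Finset.card_le_card fun x hx =>
      hmem x (List.mem_append_left _ (List.mem_toFinset.1 hx))
  have hlenD := length_doubled c
  have hmem₂ : ∀ w ∈ doubled (i₀ :: c) ++ bl.map (2 * ·), w < N := by
    intro w hw
    rcases List.mem_append.1 hw with hw | hw
    · have := hmem' _ (List.mem_append_left _ (div_two_mem_of_mem_doubled hw))
      omega
    · obtain ⟨y, hy, rfl⟩ := List.mem_map.1 hw
      have := hmem' _ (List.mem_append_right _ hy)
      omega
  have hpair := pairwise_lt_doubled_append hlt
  have hchain : (doubled (i₀ :: c)).IsChain fun u v => Before (E u) (E v) ∧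
      Red G (E u) (E v) (thr u) θ (2 * thr v) := by
    refine isChain_doubled (fun i j hij => ?_) hch fun i hi => ?_
    · rw [hE₀, hE₁, ht₀, ht₁]
      exact hij
    · rw [hE₀, hE₁, ht₀, ht₁]
      exact (hD i (hmem' i (List.mem_append_left _ hi))).2.2
  have hlast := getLast?_doubled hz
  rw [doubled_cons] at hmem₂ hpair hchain hlast
  have hzbl' := List.pairwise_cons.1 hzbl
  have hdense : ∀ u < N, ∀ w < N, u / 2 < w / 2 → ∀ X ⊆ E u, η * (E u).card ≤ X.card →
      ∀ U ⊆ E w, θ * (E w).card ≤ U.card → ∃ a ∈ X, δ * U.card ≤ (nonNbrsIn G a U).card := by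
    intro u hu w hw huw X hX hXc U hU hUc
    refine (hBB _ _ huw (by omega)).2 X (hX.trans (hEB u hu).1) ?_ U (hU.trans (hEB w hw).1) ?_
    · calc min (η * ρ) (θ * ρ) * ((B (u / 2)).card : ℝ) ≤ η * ρ * (B (u / 2)).card := by
            gcongr
            exact min_le_left _ _
        _ = η * (ρ * (B (u / 2)).card) := by ring
        _ ≤ η * (E u).card := by
            gcongr
            exact (hEB u hu).2
        _ ≤ X.card := hXc
    · calc min (η * ρ) (θ * ρ) * ((B (w / 2)).card : ℝ) ≤ θ * ρ * (B (w / 2)).card := by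
            gcongr
            exact min_le_right _ _
        _ = θ * (ρ * (B (w / 2)).card) := by ring
        _ ≤ θ * (E w).card := by
            gcongr
            exact (hEB w hw).2
        _ ≤ U.card := hUc
  have hsize : ∀ w < N, (4 : ℝ) ^ (2 * (bl.map (2 * ·)).length) * (3 * K) ≤
      θ * (E w).card := by
    intro w hw
    calc (4 : ℝ) ^ (2 * (bl.map (2 * ·)).length) * (3 * K) ≤ 4 ^ (2 * k) * (3 * K) := by
          gcongr
          · norm_num
          · rw [List.length_map]
            omega
      _ ≤ θ * (ρ * (ρ' * n)) := hK₂
      _ ≤ θ * (E w).card := by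
          gcongr
          exact hEc w hw
  have hKthr : ∀ w < N, (K : ℝ) ≤ 2 * thr w * (E w).card := by
    intro w hw
    refine hK₃.trans ?_
    have h₁ := hτthr w hw
    have h₂ := hEc w hw
    have h₃ := (hthr₀ w).le
    gcongr
  have hblue : (bl.map (2 * ·)).Pairwise fun u w => Before (E u) (E w) ∧
      ∀ b ∈ E u, ((nbrsIn G b (E w)).card : ℝ) ≤
        θ / 4 ^ (2 * (bl.map (2 * ·)).length) * (E w).card := by
    rw [List.pairwise_map]
    refine ((List.pairwise_append.1 hlt).2.1.and hzbl'.2).imp_of_mem fun {i l} _ hl hil => ?_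
    rw [hE₀, hE₀, List.length_map]
    have hlR := hmem' l (List.mem_append_right _ hl)
    exact ⟨(hbefore i l hil.1 hlR).1, fun b hb =>
      hdeg i l hil.1 hlR hil.2 b (Finset.mem_union_left _ hb)⟩
  obtain ⟨b, -, l, hl, hpath, -⟩ := exists_indPath_of_red_chain hG hδ₀ hδ₁ hθ.le
    (fun u hu => by
      rw [hη, mul_div_cancel₀ _ hN₀.ne']
      exact hτthr u hu) hη₀.le hdense hsize hKthr hblue
    ((2 * i₀ + 1) :: doubled c) (2 * i₀) 0 (E (2 * i₀)) E hpair hmem₂ hchain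
    (by
      intro y hy w hw
      obtain rfl : 2 * z + 1 = y := by simpa [hlast] using hy
      obtain ⟨l, hl, rfl⟩ := List.mem_map.1 hw
      rw [hE₀, hE₁, List.length_map]
      have hlR := hmem' l (List.mem_append_right _ hl)
      exact ⟨(hbefore z l (hzlt l hl) hlR).2, fun b hb =>
        hdeg z l (hzlt l hl) hlR (hzbl'.1 l hl) b (Finset.mem_union_right _ hb)⟩)
    subset_rfl
    (by
      rw [ht₀]
      exact mul_le_of_le_one_left (Nat.cast_nonneg _) (by linarith [(hh i₀).2]))
    (fun w _ => ⟨subset_rfl, by simp⟩)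
    (by
      simp only [List.length_cons] at hcR ⊢
      omega)
  have := hG.length_lt _ hpath
  simp only [List.length_cons, List.length_map] at this hl hlen
  omega

lemma eventually_log_le {c : ℝ} (hc : 0 < c) :
    ∃ n₀ : ℕ, ∀ n ≥ n₀, 1 ≤ Real.log n ∧ Real.log n ≤ c * n := by
  have h₁ := Real.isLittleO_log_id_atTop.bound hc
  have h₂ := Real.tendsto_log_atTop.eventually_ge_atTop 1
  have h := tendsto_natCast_atTop_atTop.eventually (h₁.and h₂)
  obtain ⟨n₀, hn₀⟩ := Filter.eventually_atTop.1 h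
  refine ⟨n₀, fun n hn => ⟨(hn₀ n hn).2, ?_⟩⟩
  have := (hn₀ n hn).1
  rw [id, Real.norm_eq_abs, Real.norm_eq_abs, Nat.abs_cast] at this
  exact (le_abs_self _).trans this

theorem stmt_2 (k : ℕ) (hk : 3 ≤ k) (ε : ℝ) (hε : 0 < ε) :
    ∃ c : ℝ, 0 < c ∧ ∃ n₀ : ℕ, ∀ n : ℕ, n₀ ≤ n →
      ∀ G : SimpleGraph (Fin n),
        ¬ HasIndMonPath G (2 * k) →
        ε * (n : ℝ) ^ ((k ^ 2 - k + 2) / 2) ≤ (cliqueCount Gᶜ ((k ^ 2 - k + 2) / 2) : ℝ) →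
        ContainsBlowup Gᶜ 2 ⌈c * (n : ℝ) / Real.log n⌉₊ := by
  have hR : (k ^ 2 - k + 2) / 2 = k.choose 2 + 1 := by
    rw [Nat.add_div_right _ two_pos, Nat.choose_two_right, Nat.mul_sub_one, sq]
  rw [hR]
  obtain ⟨c₁, hc₁, n₁, hn₁⟩ := exists_lt_of_pathFree (by omega : 1 ≤ k)
    (lt_min hε one_pos) (min_le_right ε 1)
  obtain ⟨n₂, hn₂⟩ := eventually_log_le (show 0 < c₁ / 24 by positivity)
  refine ⟨c₁ / 48, by positivity, max (max n₁ n₂) 1, fun n hn G hP hcount => ?_⟩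
  by_contra hno
  have hn0 : 0 < n := (le_max_right _ _).trans hn
  have hn0' : (0 : ℝ) < n := by exact_mod_cast hn0
  obtain ⟨hlog, hlog'⟩ := hn₂ n ((le_max_right _ _).trans ((le_max_left _ _).trans hn))
  have hcard : Fintype.card (Fin n) ≤ 2 ^ ⌈2 * Real.log n⌉₊ := by
    rw [Fintype.card_fin]
    have h₁ : (n : ℝ) ≤ 2 ^ ⌈2 * Real.log n⌉₊ := by
      rw [← Real.log_le_log_iff hn0' (by positivity), Real.log_pow]
      have h₂ := Nat.le_ceil (2 * Real.log n)
      nlinarith [Real.log_two_gt_d9]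
    exact_mod_cast h₁
  have hH := noHole_of_not_containsBlowup hno
  have hK := hn₁ n ((le_max_left _ _).trans ((le_max_left _ _).trans hn)) G _ _
    ⟨hH, hH.launches hcard, by nlinarith, fun l hl => by
      by_contra! hc
      exact hP (hl.hasIndMonPath hc)⟩
    (le_trans (by gcongr; exact min_le_left _ _) hcount)
  have ht := (Nat.ceil_lt_add_one (show 0 ≤ c₁ / 48 * n / Real.log n by positivity)).le
  have hm := (Nat.ceil_lt_add_one (show 0 ≤ 2 * Real.log n by positivity)).le
  push_cast at hK
  have hm' : (⌈2 * Real.log n⌉₊ : ℝ) + 1 ≤ 4 * Real.log n := by linarith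
  have h₁ : 3 * (⌈c₁ / 48 * n / Real.log n⌉₊ : ℝ) * (⌈2 * Real.log n⌉₊ + 1) ≤
      3 * (c₁ / 48 * n / Real.log n + 1) * (4 * Real.log n) := by
    gcongr
  have h₂ : 3 * (c₁ / 48 * n / Real.log n + 1) * (4 * Real.log n) =
      c₁ / 4 * n + 12 * Real.log n := by
    field_simp
    ring
  nlinarith [mul_pos hc₁ hn0']
end

section
/- For every integer k ≥ 3 and every real c > 0 there exists η > 0 such that for all sufficiently large n there exists an ordered graph G on n vertices with the following three properties: (i) G contains no induced monotone path P_{2k−1}; (ii) the complement Ḡ of G contains at least η·n^{⌊k²/4⌋} copies of K_{⌊k²/4⌋}; (iii) Ḡ contains no K_2[t] with t = ⌈c·n/log n⌉. -/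
section

open Finset

theorem choose_mul_pow_le (a b m : ℕ) (h : a ≤ b) :
    a.choose m * b ^ m ≤ b.choose m * a ^ m := by
  have key : a.descFactorial m * b ^ m ≤ b.descFactorial m * a ^ m := by
    induction m with
    | zero => simp
    | succ m ih =>
      rw [Nat.descFactorial_succ, Nat.descFactorial_succ, pow_succ, pow_succ]
      have h1 : (a - m) * b ≤ (b - m) * a := by
        rw [Nat.sub_mul, Nat.sub_mul, mul_comm a b]
        exact Nat.sub_le_sub_left (Nat.mul_le_mul_left m h) _
      calc (a - m) * a.descFactorial m * (b ^ m * b)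
          = (a.descFactorial m * b ^ m) * ((a - m) * b) := by ring
        _ ≤ (b.descFactorial m * a ^ m) * ((b - m) * a) := Nat.mul_le_mul ih h1
        _ = _ := by ring
  rw [Nat.descFactorial_eq_factorial_mul_choose, Nat.descFactorial_eq_factorial_mul_choose,
    mul_assoc, mul_assoc] at key
  exact Nat.le_of_mul_le_mul_left key m.factorial_pos

/-- The proportion of permutations mapping `X` into `Y` is `(#Y).choose #X / (#α).choose #X`. -/
theorem card_perm_image_subset {α : Type*} [Fintype α] [DecidableEq α] (X Y : Finset α) :
    #{σ : Equiv.Perm α | X.image σ ⊆ Y} * (Fintype.card α).choose #X =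
      (Fintype.card α).factorial * (#Y).choose #X := by
  have fib : ∀ Z : Finset α, #Z = #X →
      #{σ : Equiv.Perm α | X.image σ = Z} = #{σ : Equiv.Perm α | X.image σ = X} := by
    intro Z hZ
    obtain ⟨τ, hτ⟩ : ∃ τ : Equiv.Perm α, X.image τ = Z := by
      obtain ⟨e⟩ : Nonempty ({x // x ∈ X} ≃ {x // x ∈ Z}) :=
        ⟨Finset.equivOfCardEq hZ.symm⟩
      refine ⟨e.extendSubtype, Finset.eq_of_subset_of_card_le ?_ ?_⟩
      · intro y hy
        obtain ⟨x, hx, rfl⟩ := Finset.mem_image.1 hy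
        exact e.extendSubtype_mem x hx
      · rw [Finset.card_image_of_injective _ (Equiv.injective _), hZ]
    refine Finset.card_bij' (fun σ _ => τ⁻¹ * σ) (fun σ _ => τ * σ) ?_ ?_ ?_ ?_
    · intro σ hσ
      simp only [Finset.mem_filter_univ] at hσ ⊢
      rw [Equiv.Perm.coe_mul, ← Finset.image_image, hσ, ← hτ, Finset.image_image,
        ← Equiv.Perm.coe_mul]
      simp
    · intro σ hσ
      simp only [Finset.mem_filter_univ] at hσ ⊢
      rw [Equiv.Perm.coe_mul, ← Finset.image_image, hσ, hτ]
    · intro σ _; simp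
    · intro σ _; simp
  have cnt : ∀ W : Finset α, #{σ : Equiv.Perm α | X.image σ ⊆ W} =
      (#W).choose #X * #{σ : Equiv.Perm α | X.image σ = X} := by
    intro W
    rw [Finset.card_eq_sum_card_fiberwise (f := fun σ : Equiv.Perm α => X.image σ)
      (t := W.powersetCard #X)]
    · rw [← Finset.card_powersetCard, ← smul_eq_mul, ← Finset.sum_const]
      refine Finset.sum_congr rfl fun Z hZ => ?_
      rw [Finset.mem_powersetCard] at hZ
      rw [← fib Z hZ.2]
      congr 1
      ext σ
      simp only [Finset.mem_filter, Finset.mem_univ, true_and]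
      exact ⟨fun h => h.2, fun h => ⟨h ▸ hZ.1, h⟩⟩
    · intro σ hσ
      simp only [Finset.coe_filter, Finset.mem_univ, true_and, Set.mem_ofPred_eq] at hσ
      simp only [Finset.mem_coe, Finset.mem_powersetCard]
      exact ⟨hσ, Finset.card_image_of_injective _ σ.injective⟩
  have h1 := cnt univ
  simp only [Finset.subset_univ, Finset.filter_true, Finset.card_univ, Fintype.card_perm] at h1
  rw [cnt Y, h1]
  ring

/-- A union bound weight used for random permutations. -/
theorem choose_mul_choose_mul_pow_le (b m : ℕ) (hm : 3 * m ≤ b) (hb : 0 < b) :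
    ((b.choose m * b.choose (2 * m) : ℕ) : ℝ) *
      (((2 * m).choose m : ℝ) / (b.choose m : ℝ)) ^ 13 ≤ (1 / 3) ^ m := by
  have hc : (0 : ℝ) < b.choose m := by exact_mod_cast Nat.choose_pos (by omega)
  have he : (0 : ℝ) < (2 * m).choose m := by exact_mod_cast Nat.choose_pos (by omega)
  set p : ℝ := ((2 * m).choose m : ℝ) / (b.choose m : ℝ) with hp
  have hp0 : 0 < p := div_pos he hc
  have he4 : ((2 * m).choose m : ℝ) ≤ 4 ^ m := by
    have := Nat.choose_le_two_pow (2 * m) m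
    rw [pow_mul] at this
    exact_mod_cast this
  have hpm : p ≤ (2 / 3) ^ m := by
    have h1 : (((2 * m).choose m * b ^ m : ℕ) : ℝ) ≤ ((b.choose m * (2 * m) ^ m : ℕ) : ℝ) := by
      exact_mod_cast choose_mul_pow_le (2 * m) b m (by omega)
    push_cast at h1
    have hbm : (0 : ℝ) < (b : ℝ) ^ m := by positivity
    have h2 : p ≤ ((2 * m : ℝ) / b) ^ m := by
      rw [hp, div_pow, div_le_div_iff₀ hc hbm]
      linarith
    refine h2.trans (pow_le_pow_left₀ (by positivity) ?_ m)
    rw [div_le_div_iff₀ (by positivity) (by norm_num)]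
    have : (3 * m : ℝ) ≤ b := by exact_mod_cast hm
    linarith
  have hA : (b.choose m : ℝ) = (2 * m).choose m / p := by
    rw [hp]; field_simp
  have hB : (b.choose (2 * m) : ℝ) ≤ (2 * m).choose m / p ^ 2 := by
    have h1 : b.choose (2 * m) * (2 * m).choose m ≤ b.choose m * b.choose m := by
      rw [Nat.choose_mul (by omega)]
      rw [show 2 * m - m = m by omega]
      exact Nat.mul_le_mul_left _ (Nat.choose_le_choose _ (by omega))
    have h2 : (b.choose (2 * m) : ℝ) * (2 * m).choose m ≤ b.choose m * b.choose m := by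
      exact_mod_cast h1
    rw [le_div_iff₀ (by positivity), hp, div_pow]
    rw [mul_div_assoc', div_le_iff₀ (by positivity)]
    nlinarith
  have h3 : ((b.choose m * b.choose (2 * m) : ℕ) : ℝ) * p ^ 13 ≤ (16 : ℝ) ^ m * p ^ 10 := by
    push_cast
    calc (b.choose m : ℝ) * b.choose (2 * m) * p ^ 13
        ≤ ((2 * m).choose m / p) * ((2 * m).choose m / p ^ 2) * p ^ 13 := by
          rw [← hA]; gcongr
      _ = ((2 * m).choose m : ℝ) * (2 * m).choose m * p ^ 10 := by field_simp
      _ ≤ 4 ^ m * 4 ^ m * p ^ 10 := by gcongr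
      _ = (16 : ℝ) ^ m * p ^ 10 := by rw [← mul_pow]; norm_num
  refine h3.trans ?_
  calc (16 : ℝ) ^ m * p ^ 10 ≤ 16 ^ m * ((2 / 3) ^ m) ^ 10 := by gcongr
    _ = (16 * (2 / 3) ^ 10) ^ m := by rw [mul_pow, ← pow_mul, ← pow_mul, mul_comm m 10]
    _ ≤ (1 / 3) ^ m := by gcongr; norm_num

/-- Thirteen permutations can be chosen whose joint images double every set containing at most a
third of the elements. -/
theorem exists_perm_expander (b : ℕ) :
    ∃ σ : Fin 13 → Equiv.Perm (Fin b), ∀ X : Finset (Fin b), 3 * #X ≤ b →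
      2 * #X ≤ #(univ.biUnion fun i => X.image (σ i)) := by
  by_contra! hcon
  rcases Nat.eq_zero_or_pos b with rfl | hb
  · obtain ⟨X, hX, h⟩ := hcon 1
    omega
  let S : Finset (Fin b) → Finset (Fin b) → Finset (Fin 13 → Equiv.Perm (Fin b)) :=
    fun X Y => Fintype.piFinset fun _ => {σ : Equiv.Perm (Fin b) | X.image σ ⊆ Y}
  let T : ℕ → Finset (Fin 13 → Equiv.Perm (Fin b)) := fun m =>
    ((univ : Finset (Fin b)).powersetCard m ×ˢ (univ : Finset (Fin b)).powersetCard (2 * m)).biUnion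
      fun P => S P.1 P.2
  have hcover : (univ : Finset (Fin 13 → Equiv.Perm (Fin b))) ⊆ (Finset.Icc 1 (b / 3)).biUnion T := by
    intro σ _
    obtain ⟨X, hX, h⟩ := hcon σ
    obtain ⟨Y, hY, -, hYc⟩ := Finset.exists_subsuperset_card_eq
      (Finset.subset_univ (univ.biUnion fun i => X.image (σ i))) h.le (by simp; omega)
    simp only [Finset.mem_biUnion, T, S, Finset.mem_product, Finset.mem_powersetCard_univ,
      Fintype.mem_piFinset, Finset.mem_filter_univ, Finset.mem_Icc]
    refine ⟨#X, ⟨by omega, by omega⟩, (X, Y), ⟨rfl, hYc⟩, fun i => ?_⟩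
    exact (Finset.subset_biUnion_of_mem (fun i => X.image (σ i)) (Finset.mem_univ i)).trans hY
  have hS : ∀ m, 3 * m ≤ b → (#(T m) : ℝ) ≤ (1 / 3) ^ m * (b.factorial : ℝ) ^ 13 := by
    intro m hm
    have hc : (0 : ℝ) < b.choose m := by exact_mod_cast Nat.choose_pos (by omega)
    have h1 : (#(T m) : ℝ) ≤ ∑ P ∈ (univ : Finset (Fin b)).powersetCard m ×ˢ
        (univ : Finset (Fin b)).powersetCard (2 * m), (#(S P.1 P.2) : ℝ) := by
      exact_mod_cast Finset.card_biUnion_le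
    refine h1.trans ?_
    have h2 : ∀ P ∈ (univ : Finset (Fin b)).powersetCard m ×ˢ
        (univ : Finset (Fin b)).powersetCard (2 * m), (#(S P.1 P.2) : ℝ) =
        (b.factorial : ℝ) ^ 13 * (((2 * m).choose m : ℝ) / (b.choose m : ℝ)) ^ 13 := by
      intro P hP
      simp only [Finset.mem_product, Finset.mem_powersetCard_univ] at hP
      have h3 := card_perm_image_subset P.1 P.2
      rw [hP.1, hP.2, Fintype.card_fin] at h3
      have h4 : (#{σ : Equiv.Perm (Fin b) | P.1.image σ ⊆ P.2} : ℝ) =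
          b.factorial * (((2 * m).choose m : ℝ) / (b.choose m : ℝ)) := by
        rw [mul_div_assoc', eq_div_iff hc.ne']
        exact_mod_cast h3
      simp only [S, Fintype.card_piFinset, Finset.prod_const, Finset.card_univ, Fintype.card_fin]
      rw [Nat.cast_pow, h4, mul_pow]
    rw [Finset.sum_congr rfl h2, Finset.sum_const, Finset.card_product, Finset.card_powersetCard,
      Finset.card_powersetCard, Finset.card_univ, Fintype.card_fin, nsmul_eq_mul]
    have h5 := choose_mul_choose_mul_pow_le b m hm hb
    have h6 : (0 : ℝ) ≤ (b.factorial : ℝ) ^ 13 := by positivity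
    nlinarith [mul_le_mul_of_nonneg_right h5 h6]
  have htot : ((b.factorial : ℝ)) ^ 13 ≤
      ∑ m ∈ Finset.Icc 1 (b / 3), (1 / 3 : ℝ) ^ m * (b.factorial : ℝ) ^ 13 := by
    have h1 : (b.factorial ^ 13) ≤ ∑ m ∈ Finset.Icc 1 (b / 3), #(T m) := by
      have := (Finset.card_le_card hcover).trans Finset.card_biUnion_le
      simpa [Fintype.card_perm] using this
    calc ((b.factorial : ℝ)) ^ 13 ≤ ∑ m ∈ Finset.Icc 1 (b / 3), (#(T m) : ℝ) := by
          exact_mod_cast h1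
      _ ≤ _ := Finset.sum_le_sum fun m hm => hS m (by rw [Finset.mem_Icc] at hm; omega)
  have hgeo : ∀ K : ℕ, ∑ m ∈ Finset.Icc 1 K, (1 / 3 : ℝ) ^ m = (1 - (1 / 3) ^ K) / 2 := by
    intro K
    induction K with
    | zero => simp
    | succ K ih => rw [Finset.sum_Icc_succ_top (by omega), ih]; ring
  rw [← Finset.sum_mul, hgeo] at htot
  have hf : (0 : ℝ) < (b.factorial : ℝ) ^ 13 := by positivity
  have : (0 : ℝ) < (1 / 3) ^ (b / 3) := by positivity
  nlinarith

/-- Bounded degree expanders, as symmetric neighbourhood functions. -/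
theorem exists_expander (b : ℕ) :
    ∃ E : Fin b → Finset (Fin b), (∀ x y, y ∈ E x → x ∈ E y) ∧ (∀ x, #(E x) ≤ 26) ∧
      ∀ X : Finset (Fin b), 3 * #X ≤ b → 2 * #X ≤ #(X.biUnion E) := by
  obtain ⟨σ, hσ⟩ := exists_perm_expander b
  refine ⟨fun x => univ.image (fun i => σ i x) ∪ univ.image (fun i => (σ i).symm x), ?_, ?_, ?_⟩
  · intro x y h
    simp only [Finset.mem_union, Finset.mem_image, Finset.mem_univ, true_and] at h ⊢
    rcases h with ⟨i, rfl⟩ | ⟨i, rfl⟩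
    · exact Or.inr ⟨i, by simp⟩
    · exact Or.inl ⟨i, by simp⟩
  · intro x
    refine (Finset.card_union_le _ _).trans ?_
    have h1 := Finset.card_image_le (s := univ) (f := fun i => σ i x)
    have h2 := Finset.card_image_le (s := univ) (f := fun i => (σ i).symm x)
    simp only [Finset.card_univ, Fintype.card_fin] at h1 h2
    omega
  · intro X hX
    refine (hσ X hX).trans (Finset.card_le_card ?_)
    intro y hy
    simp only [Finset.mem_biUnion, Finset.mem_image, Finset.mem_univ, true_and,
      Finset.mem_union] at hy ⊢
    obtain ⟨i, x, hx, rfl⟩ := hy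
    exact ⟨x, hx, Or.inl ⟨i, rfl⟩⟩

/-- The set of endpoints of walks of length `j` starting in `X`. -/
def walkSet {α : Type*} [DecidableEq α] (E : α → Finset α) : ℕ → Finset α → Finset α
  | 0, X => X
  | j + 1, X => (walkSet E j X).biUnion E

section walkSet

variable {α : Type*} [DecidableEq α] {E : α → Finset α}

theorem mem_walkSet_iff {j : ℕ} {X : Finset α} {y : α} :
    y ∈ walkSet E j X ↔ ∃ x ∈ X, y ∈ walkSet E j {x} := by
  induction j generalizing y with
  | zero => simp [walkSet]
  | succ j ih =>
    simp only [walkSet, Finset.mem_biUnion]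
    constructor
    · rintro ⟨z, hz, hy⟩
      obtain ⟨x, hx, hzx⟩ := ih.1 hz
      exact ⟨x, hx, z, hzx, hy⟩
    · rintro ⟨x, hx, z, hz, hy⟩
      exact ⟨z, ih.2 ⟨x, hx, hz⟩, hy⟩

theorem walkSet_add (i j : ℕ) (X : Finset α) :
    walkSet E (i + j) X = walkSet E j (walkSet E i X) := by
  induction j with
  | zero => rfl
  | succ j ih => rw [← add_assoc, walkSet, ih, walkSet]

theorem walkSet_trans {i j : ℕ} {x y z : α} (hy : y ∈ walkSet E i {x})
    (hz : z ∈ walkSet E j {y}) : z ∈ walkSet E (i + j) {x} := by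
  rw [walkSet_add]
  exact mem_walkSet_iff.2 ⟨y, hy, hz⟩

theorem walkSet_symm (hE : ∀ x y, y ∈ E x → x ∈ E y) {j : ℕ} {x y : α}
    (h : y ∈ walkSet E j {x}) : x ∈ walkSet E j {y} := by
  induction j generalizing y with
  | zero =>
    simp only [walkSet, Finset.mem_singleton] at h ⊢
    exact h.symm
  | succ j ih =>
    obtain ⟨z, hz, hy⟩ := Finset.mem_biUnion.1 h
    rw [add_comm]
    refine walkSet_trans ?_ (ih hz)
    simpa [walkSet] using hE _ _ hy

theorem card_walkSet_le {D : ℕ} (hD : ∀ x, #(E x) ≤ D) (j : ℕ) (x : α) :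
    #(walkSet E j {x}) ≤ D ^ j := by
  induction j with
  | zero => simp [walkSet]
  | succ j ih =>
    rw [walkSet, pow_succ]
    exact (Finset.card_biUnion_le_card_mul _ _ _ fun y _ => hD y).trans
      (Nat.mul_le_mul_right _ ih)

theorem le_card_walkSet {q : ℕ}
    (hX : ∀ X : Finset α, #X ≤ q → 2 * #X ≤ #(X.biUnion E)) (j : ℕ) (X : Finset α) :
    2 ^ j * #X ≤ #(walkSet E j X) ∨ (0 < j ∧ 2 * q ≤ #(walkSet E j X)) := by
  induction j with
  | zero => simp [walkSet]
  | succ j ih =>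
    by_cases h : #(walkSet E j X) ≤ q
    · have := hX _ h
      rw [walkSet, pow_succ]
      rcases ih with h1 | h1
      · left; nlinarith
      · right; omega
    · right
      obtain ⟨Y, hY, hYq⟩ := Finset.exists_subset_card_eq (not_le.1 h).le
      refine ⟨j.succ_pos, ?_⟩
      rw [walkSet, ← hYq]
      exact (hX Y hYq.le).trans (Finset.card_le_card (Finset.biUnion_subset_biUnion_of_subset_left _ hY))

theorem exists_two_mul_card_walkSet_gt {q : ℕ} (hq : 0 < q)
    (hX : ∀ X : Finset α, #X ≤ q → 2 * #X ≤ #(X.biUnion E)) (K : ℕ) (F : ℕ → Finset α)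
    (hF : 3 * q ≤ ∑ j ∈ range K, #(F j)) :
    ∃ j < K, 3 * q < 2 * #(walkSet E j (F j)) := by
  by_contra! hcon
  have hsmall : ∀ j < K, 2 ^ (j + 1) * #(F j) ≤ 3 * q := by
    intro j hj
    have h1 := hcon j hj
    rcases le_card_walkSet hX j (F j) with h2 | h2
    · rw [pow_succ]; nlinarith
    · omega
  have hsum : ∀ k ≤ K, 2 ^ k * ∑ j ∈ range k, #(F j) + 3 * q ≤ 2 ^ k * (3 * q) := by
    intro k hk
    induction k with
    | zero => simp
    | succ k ih =>
      have h1 := ih (by omega)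
      have h2 := hsmall k (by omega)
      rw [Finset.sum_range_succ, mul_add, pow_succ] at *
      nlinarith
  have h1 := hsum K le_rfl
  have h2 : 2 ^ K * (3 * q) ≤ 2 ^ K * ∑ j ∈ range K, #(F j) := Nat.mul_le_mul_left _ hF
  omega

end walkSet

theorem exists_level_split {α : Type*} (A : Finset (ℕ × α)) (N : ℕ) (hN : 0 < N) (hA : 2 * N ≤ #A) :
    ∃ s, N ≤ #{a ∈ A | a.1 ≤ s} ∧ N ≤ #{a ∈ A | s ≤ a.1} := by
  have hex : ∃ s, N ≤ #{a ∈ A | a.1 ≤ s} := by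
    refine ⟨A.sup Prod.fst, ?_⟩
    rw [Finset.filter_true_of_mem fun a ha => Finset.le_sup (f := Prod.fst) ha]
    omega
  classical
  refine ⟨Nat.find hex, Nat.find_spec hex, ?_⟩
  have hsplit := Finset.card_filter_add_card_filter_not (s := A) (fun a => Nat.find hex ≤ a.1)
  have hlt : #{a ∈ A | ¬ Nat.find hex ≤ a.1} < N + 1 := by
    rcases Nat.eq_zero_or_pos (Nat.find hex) with h0 | h0
    · simp [h0]
    · have := Nat.find_min hex (m := Nat.find hex - 1) (by omega)
      refine lt_of_le_of_lt (Finset.card_le_card ?_) ((not_le.1 this).trans (by omega))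
      intro a ha
      simp only [Finset.mem_filter] at ha ⊢
      exact ⟨ha.1, by omega⟩
  omega

/-- The strict order on `ℕ × α` (levels and positions) generated by joining every point to the
`E`-neighbours of its position on the next level. -/
def LayerLT {α : Type*} [DecidableEq α] (E : α → Finset α) (u v : ℕ × α) : Prop :=
  ∃ j, 0 < j ∧ v.1 = u.1 + j ∧ v.2 ∈ walkSet E j {u.2}

section LayerLT

variable {α : Type*} [DecidableEq α] {E : α → Finset α}

theorem LayerLT.fst_lt {u v : ℕ × α} (h : LayerLT E u v) : u.1 < v.1 := by
  obtain ⟨j, hj, h, -⟩ := h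
  omega

theorem LayerLT.trans {u v w : ℕ × α} (h₁ : LayerLT E u v) (h₂ : LayerLT E v w) :
    LayerLT E u w := by
  obtain ⟨i, hi, hv, hv'⟩ := h₁
  obtain ⟨j, hj, hw, hw'⟩ := h₂
  exact ⟨i + j, by omega, by omega, walkSet_trans hv' hw'⟩

theorem exists_walk_of_level_le {q : ℕ} (hq : 0 < q)
    (hX : ∀ X : Finset α, #X ≤ q → 2 * #X ≤ #(X.biUnion E)) (A : Finset (ℕ × α)) (s : ℕ)
    (hA : 3 * q ≤ #{a ∈ A | a.1 ≤ s}) :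
    ∃ W : Finset α, 3 * q < 2 * #W ∧
      ∀ w ∈ W, ∃ j, ∃ a ∈ A, s = a.1 + j ∧ w ∈ walkSet E j {a.2} := by
  obtain ⟨j, hj, hW⟩ := exists_two_mul_card_walkSet_gt hq hX (s + 1)
    (fun j => {a ∈ A | a.1 + j = s}.image Prod.snd) (by
      refine hA.trans ?_
      rw [Finset.card_eq_sum_card_fiberwise (f := fun a => s - a.1) (t := range (s + 1))
        (fun a _ => by simp)]
      refine Finset.sum_le_sum fun j _ => ?_
      rw [Finset.card_image_of_injOn]
      · refine Finset.card_le_card fun a ha => ?_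
        simp only [Finset.mem_filter] at ha ⊢
        exact ⟨ha.1.1, by omega⟩
      · intro a ha b hb hab
        simp only [Finset.coe_filter, Set.mem_ofPred_eq] at ha hb
        exact Prod.ext (by omega) hab)
  refine ⟨_, hW, fun w hw => ?_⟩
  obtain ⟨x, hx, hwx⟩ := mem_walkSet_iff.1 hw
  obtain ⟨a, ha, rfl⟩ := Finset.mem_image.1 hx
  rw [Finset.mem_filter] at ha
  exact ⟨j, a, ha.1, ha.2.symm, hwx⟩

theorem exists_walk_of_le_level {q : ℕ} (hq : 0 < q) (hE : ∀ x y, y ∈ E x → x ∈ E y)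
    (hX : ∀ X : Finset α, #X ≤ q → 2 * #X ≤ #(X.biUnion E)) (B : Finset (ℕ × α)) (s : ℕ)
    (hB : 3 * q ≤ #{b ∈ B | s ≤ b.1}) :
    ∃ W : Finset α, 3 * q < 2 * #W ∧
      ∀ w ∈ W, ∃ j, ∃ b ∈ B, b.1 = s + j ∧ b.2 ∈ walkSet E j {w} := by
  obtain ⟨j, hj, hW⟩ := exists_two_mul_card_walkSet_gt hq hX (B.sup Prod.fst + 1)
    (fun j => {b ∈ B | b.1 = s + j}.image Prod.snd) (by
      refine hB.trans ?_
      rw [Finset.card_eq_sum_card_fiberwise (f := fun b => b.1 - s)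
        (t := range (B.sup Prod.fst + 1)) (fun b hb => by
          simp only [Finset.coe_filter, Set.mem_ofPred_eq] at hb
          have := Finset.le_sup (f := Prod.fst) hb.1
          simp only [Finset.coe_range, Set.mem_Iio]
          omega)]
      refine Finset.sum_le_sum fun j _ => ?_
      rw [Finset.card_image_of_injOn]
      · refine Finset.card_le_card fun a ha => ?_
        simp only [Finset.mem_filter] at ha ⊢
        exact ⟨ha.1.1, by omega⟩
      · intro a ha b hb hab
        simp only [Finset.coe_filter, Set.mem_ofPred_eq] at ha hb
        exact Prod.ext (by omega) hab)
  refine ⟨_, hW, fun w hw => ?_⟩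
  obtain ⟨x, hx, hwx⟩ := mem_walkSet_iff.1 hw
  obtain ⟨b, hb, rfl⟩ := Finset.mem_image.1 hx
  rw [Finset.mem_filter] at hb
  exact ⟨j, b, hb.1, hb.2, walkSet_symm hE hwx⟩

/-- Two large disjoint sets in the layered order contain a comparable pair. -/
theorem exists_layerLT_of_card [Fintype α] {q : ℕ} (hq : 0 < q) (hα : Fintype.card α = 3 * q)
    (hE : ∀ x y, y ∈ E x → x ∈ E y)
    (hX : ∀ X : Finset α, #X ≤ q → 2 * #X ≤ #(X.biUnion E)) (A B : Finset (ℕ × α))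
    (hAB : Disjoint A B) (hA : 2 * (3 * q) ≤ #A) (hB : 2 * (3 * q) ≤ #B) :
    ∃ a ∈ A, ∃ b ∈ B, LayerLT E a b ∨ LayerLT E b a := by
  obtain ⟨s, hs, hs'⟩ := exists_level_split A _ (by omega) hA
  obtain ⟨t, ht, ht'⟩ := exists_level_split B _ (by omega) hB
  have main : ∀ (A B : Finset (ℕ × α)) (s t : ℕ), s ≤ t → Disjoint A B →
      3 * q ≤ #{a ∈ A | a.1 ≤ s} → 3 * q ≤ #{b ∈ B | t ≤ b.1} →
      ∃ a ∈ A, ∃ b ∈ B, LayerLT E a b := by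
    intro A B s t hst hAB hA hB
    obtain ⟨V, hV, hVw⟩ := exists_walk_of_level_le hq hX A s hA
    obtain ⟨W, hW, hWw⟩ := exists_walk_of_le_level hq hE hX B s (hB.trans
      (Finset.card_le_card fun b hb => by
        simp only [Finset.mem_filter] at hb ⊢
        exact ⟨hb.1, by omega⟩))
    obtain ⟨w, hw⟩ : (V ∩ W).Nonempty := by
      rw [← Finset.card_pos]
      have h1 := Finset.card_union_add_card_inter V W
      have h2 := Finset.card_le_univ (V ∪ W)
      omega
    rw [Finset.mem_inter] at hw
    obtain ⟨i, a, ha, hai, haw⟩ := hVw w hw.1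
    obtain ⟨j, b, hb, hbj, hbw⟩ := hWw w hw.2
    have hab := walkSet_trans haw hbw
    refine ⟨a, ha, b, hb, i + j, ?_, by omega, hab⟩
    rcases Nat.eq_zero_or_pos (i + j) with h0 | h0
    · rw [h0] at hab
      have h1 : b.2 = a.2 := by simpa [walkSet] using hab
      have h2 : a = b := Prod.ext (by omega) h1.symm
      exact absurd (h2 ▸ hb) (Finset.disjoint_left.1 hAB ha)
    · exact h0
  rcases le_total s t with hst | hst
  · obtain ⟨a, ha, b, hb, h⟩ := main A B s t hst hAB hs ht'
    exact ⟨a, ha, b, hb, Or.inl h⟩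
  · obtain ⟨b, hb, a, ha, h⟩ := main B A t s hst hAB.symm ht hs'
    exact ⟨a, ha, b, hb, Or.inr h⟩

/-- On the first `h` levels, every point is comparable to few others. -/
theorem card_comparable_le (hE : ∀ x y, y ∈ E x → x ∈ E y) {D : ℕ} (hD : ∀ x, #(E x) ≤ D)
    (hD0 : 0 < D) (h : ℕ) (u : ℕ × α) (S : Finset (ℕ × α)) (hu : u.1 < h)
    (hS : ∀ v ∈ S, v.1 < h ∧ (v = u ∨ LayerLT E u v ∨ LayerLT E v u)) :
    #S ≤ 2 * (h * D ^ h) := by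
  let f : ℕ → Finset (ℕ × α) := fun j =>
    ((walkSet E j {u.2}).image fun y => (u.1 + j, y)) ∪
      ((walkSet E j {u.2}).image fun y => (u.1 - j, y))
  have hsub : S ⊆ (range h).biUnion f := by
    intro v hv
    obtain ⟨hvh, hv⟩ := hS v hv
    simp only [Finset.mem_biUnion, Finset.mem_range, f, Finset.mem_union, Finset.mem_image]
    rcases hv with rfl | ⟨j, hj, h1, h2⟩ | ⟨j, hj, h1, h2⟩
    · exact ⟨0, by omega, Or.inl ⟨v.2, by simp [walkSet], rfl⟩⟩
    · exact ⟨j, by omega, Or.inl ⟨v.2, h2, Prod.ext h1.symm rfl⟩⟩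
    · exact ⟨j, by omega, Or.inr ⟨v.2, walkSet_symm hE h2, Prod.ext (by simp; omega) rfl⟩⟩
  refine (Finset.card_le_card hsub).trans ((Finset.card_biUnion_le_card_mul _ _ (2 * D ^ h) ?_).trans
    (by rw [Finset.card_range]; apply le_of_eq; ring))
  intro j hj
  have h1 : #(walkSet E j {u.2}) ≤ D ^ h := (card_walkSet_le hD j u.2).trans
    (Nat.pow_le_pow_right hD0 (Finset.mem_range.1 hj).le)
  refine (Finset.card_union_le _ _).trans ?_
  have h2 := Finset.card_image_le (s := walkSet E j {u.2}) (f := fun y => (u.1 + j, y))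
  have h3 := Finset.card_image_le (s := walkSet E j {u.2}) (f := fun y => (u.1 - j, y))
  omega

end LayerLT

/-- Greedy lower bound for the number of independent `r`-sets when closed neighbourhoods within a
vertex set `B` are small. -/
theorem pow_le_factorial_mul_cliqueCount_compl {V : Type*} [Fintype V] [DecidableEq V]
    (G : SimpleGraph V) (B : Finset V) (Δ r : ℕ)
    (hΔ : ∀ u ∈ B, ∀ S ⊆ B, (∀ v ∈ S, v = u ∨ G.Adj u v) → #S ≤ Δ)
    (hB : 2 * (r * Δ) ≤ #B) :
    ((#B : ℝ) / 2) ^ r ≤ r.factorial * (cliqueCount Gᶜ r : ℝ) := by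
  classical
  let F : ℕ → Finset (Finset V) := fun i => {s ∈ B.powersetCard i | Gᶜ.IsClique (s : Set V)}
  have hF : ∀ i ≤ r, ((#B : ℝ) / 2) ^ i ≤ i.factorial * (#(F i) : ℝ) := by
    intro i hi
    induction i with
    | zero => simp [F, Finset.filter_singleton]
    | succ i ih =>
      specialize ih (by omega)
      let bad : Finset V → Finset V := fun s => {v ∈ B | ∃ u ∈ s, v = u ∨ G.Adj u v}
      let P : Finset (Finset V × V) := (F i ×ˢ B).filter fun p => p.2 ∉ bad p.1
      have hbad : ∀ s ∈ F i, #(bad s) ≤ i * Δ := by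
        intro s hs
        simp only [F, Finset.mem_filter, Finset.mem_powersetCard] at hs
        have h1 : bad s ⊆ s.biUnion fun u => {v ∈ B | v = u ∨ G.Adj u v} := by
          intro v hv
          simp only [bad, Finset.mem_filter, Finset.mem_biUnion] at hv ⊢
          obtain ⟨hv, u, hu, h⟩ := hv
          exact ⟨u, hu, hv, h⟩
        refine (Finset.card_le_card h1).trans ?_
        rw [← hs.1.2]
        refine Finset.card_biUnion_le_card_mul _ _ _ fun u hu => ?_
        exact hΔ u (hs.1.1 hu) _ (Finset.filter_subset _ _) fun v hv => (Finset.mem_filter.1 hv).2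
      have hP1 : #(F i) * #B ≤ 2 * #P := by
        have h1 : #P = ∑ s ∈ F i, #(B \ bad s) := by
          rw [Finset.card_filter, Finset.sum_product]
          refine Finset.sum_congr rfl fun s _ => ?_
          rw [← Finset.card_filter, Finset.sdiff_eq_filter]
        rw [h1, Finset.mul_sum, ← smul_eq_mul, ← Finset.sum_const]
        refine Finset.sum_le_sum fun s hs => ?_
        have h2 := hbad s hs
        have h3 := Finset.le_card_sdiff (bad s) B
        have h4 : i * Δ ≤ r * Δ := Nat.mul_le_mul_right _ (by omega)
        omega
      have hP2 : #P ≤ (i + 1) * #(F (i + 1)) := by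
        refine Finset.card_le_mul_card_image_of_maps_to (f := fun p : Finset V × V => insert p.2 p.1)
          ?_ (i + 1) ?_
        · rintro ⟨s, v⟩ hp
          simp only [P, F, bad, Finset.mem_filter, Finset.mem_product, Finset.mem_powersetCard,
            not_and, not_exists, not_or] at hp ⊢
          obtain ⟨⟨⟨⟨hsB, hsi⟩, hs⟩, hv⟩, hb⟩ := hp
          have hvs : v ∉ s := fun h => (hb hv v h).1 rfl
          refine ⟨⟨Finset.insert_subset hv hsB, by rw [Finset.card_insert_of_notMem hvs, hsi]⟩, ?_⟩
          rw [Finset.coe_insert]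
          refine hs.insert fun u hu hne => ?_
          rw [SimpleGraph.compl_adj]
          exact ⟨hne, fun h => (hb hv u hu).2 h.symm⟩
        · intro t ht
          simp only [F, Finset.mem_filter, Finset.mem_powersetCard] at ht
          rw [← ht.1.2]
          refine Finset.card_le_card_of_injOn Prod.snd ?_ ?_
          · rintro ⟨s, v⟩ hp
            rw [Finset.mem_coe, Finset.mem_filter] at hp
            rw [← hp.2]
            simp
          · rintro ⟨s, v⟩ hp ⟨s', v'⟩ hp' hvv
            simp only [P, bad, Finset.coe_filter, Finset.mem_filter, Set.mem_ofPred_eq,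
              Finset.mem_product, not_and, not_exists, not_or] at hp hp' hvv
            subst hvv
            have h1 : v ∉ s := fun h => (hp.1.2 hp.1.1.2 v h).1 rfl
            have h2 : v ∉ s' := fun h => (hp'.1.2 hp'.1.1.2 v h).1 rfl
            rw [← Finset.erase_insert h1, ← Finset.erase_insert h2, hp.2, hp'.2]
      have h5 : ((#(F i) * #B : ℕ) : ℝ) ≤ ((2 * ((i + 1) * #(F (i + 1))) : ℕ) : ℝ) := by
        exact_mod_cast hP1.trans (Nat.mul_le_mul_left 2 hP2)
      push_cast at h5
      rw [pow_succ, Nat.factorial_succ]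
      push_cast
      calc ((#B : ℝ) / 2) ^ i * (#B / 2) ≤ (i.factorial * (#(F i) : ℝ)) * (#B / 2) := by gcongr
        _ = i.factorial * (#(F i) * #B / 2) := by ring
        _ ≤ i.factorial * ((i + 1) * #(F (i + 1))) := by gcongr; linarith
        _ = _ := by ring
  refine (hF r le_rfl).trans ?_
  gcongr
  rw [cliqueCount, ← Set.ncard_coe_finset]
  refine Set.ncard_le_ncard ?_ (Set.toFinite _)
  intro s hs
  simp only [F, Finset.coe_filter, Finset.mem_powersetCard, Set.mem_ofPred_eq] at hs
  exact ⟨hs.1.2, hs.2⟩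

theorem eventually_params (c : ℝ) (hc : 0 < c) (r : ℕ) :
    ∃ κ : ℝ, 0 < κ ∧ ∃ n₀ : ℕ, ∀ n : ℕ, n₀ ≤ n → ∃ q h : ℕ, 0 < q ∧
      2 * (3 * q) ≤ ⌈c * (n : ℝ) / Real.log n⌉₊ ∧ h * (3 * q) ≤ n ∧
      κ * n ≤ ((h * (3 * q) : ℕ) : ℝ) ∧ 2 * (r * (2 * (h * 26 ^ h))) ≤ h * (3 * q) := by
  obtain ⟨δ, hδ, hδ8, hδc⟩ : ∃ δ : ℝ, 0 < δ ∧ δ ≤ 1 / 8 ∧ δ * c ≤ 1 :=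
    ⟨min (1 / 8) (1 / c), by positivity, min_le_left _ _, by
      calc min (1 / 8) (1 / c) * c ≤ 1 / c * c := by gcongr; exact min_le_right _ _
        _ = 1 := by field_simp⟩
  have hlog : Filter.Tendsto (fun n : ℕ => Real.log n) Filter.atTop Filter.atTop :=
    Real.tendsto_log_atTop.comp tendsto_natCast_atTop_atTop
  have hsqrt : Filter.Tendsto (fun n : ℕ => √(n : ℝ)) Filter.atTop Filter.atTop :=
    Real.tendsto_sqrt_atTop.comp tendsto_natCast_atTop_atTop
  have hev := ((hlog.eventually_ge_atTop (2 / δ)).and (hlog.eventually_ge_atTop 1)).and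
    ((hsqrt.eventually_ge_atTop (12 / c)).and (hsqrt.eventually_ge_atTop (32 * r / (δ * c))))
  obtain ⟨n₀, hn₀⟩ := Filter.eventually_atTop.1 hev
  refine ⟨δ * c / 8, by positivity, max n₀ 1, fun n hn => ?_⟩
  obtain ⟨⟨h1, h2⟩, h3, h4⟩ := hn₀ n (le_of_max_le_left hn)
  have hn1 : (1 : ℝ) ≤ n := by exact_mod_cast le_of_max_le_right hn
  set ℓ := Real.log n with hℓ
  have hℓ0 : 0 < ℓ := by linarith
  set w := √(n : ℝ) with hw
  have hww : w * w = n := Real.mul_self_sqrt (by linarith)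
  have hw1 : 1 ≤ w := by rw [hw]; exact Real.one_le_sqrt.2 hn1
  have hexp : Real.exp (ℓ / 2) = w := by
    rw [hw, Real.sqrt_eq_rpow, Real.rpow_def_of_pos (by linarith)]
    congr 1; ring
  have hℓw : ℓ ≤ 2 * w := by
    have := Real.add_one_le_exp (ℓ / 2)
    rw [hexp] at this
    linarith
  have hx : 1 ≤ c * n / (6 * ℓ) := by
    rw [le_div_iff₀ (by positivity), ← hww]
    rw [div_le_iff₀ hc] at h3
    nlinarith
  set q := ⌊c * n / (6 * ℓ)⌋₊ with hq
  set h := ⌊δ * ℓ⌋₊ with hh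
  have hq_le : (q : ℝ) ≤ c * n / (6 * ℓ) := Nat.floor_le (by positivity)
  have hq_ge : c * n / (12 * ℓ) ≤ q := by
    have h5 := Nat.lt_floor_add_one (c * n / (6 * ℓ))
    rw [← hq] at h5
    have h6 : (1 : ℝ) ≤ q := by exact_mod_cast Nat.floor_pos.2 hx
    have h7 : c * n / (12 * ℓ) = c * n / (6 * ℓ) / 2 := by field_simp; norm_num
    rw [h7]; linarith
  have hh_le : (h : ℝ) ≤ δ * ℓ := Nat.floor_le (by positivity)
  have hh_ge : δ * ℓ / 2 ≤ h := by
    have h5 := Nat.lt_floor_add_one (δ * ℓ)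
    rw [← hh] at h5
    rw [div_le_iff₀ hδ] at h1
    linarith
  have hN : δ * c / 8 * n ≤ ((h * (3 * q) : ℕ) : ℝ) := by
    push_cast
    calc δ * c / 8 * n = (δ * ℓ / 2) * (3 * (c * n / (12 * ℓ))) := by field_simp; norm_num
      _ ≤ h * (3 * q) := by gcongr
  refine ⟨q, h, Nat.floor_pos.2 hx, ?_, ?_, hN, ?_⟩
  · have h5 : ((2 * (3 * q) : ℕ) : ℝ) ≤ (⌈c * n / ℓ⌉₊ : ℝ) := by
      refine le_trans ?_ (Nat.le_ceil _)
      push_cast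
      calc (2 : ℝ) * (3 * q) ≤ 2 * (3 * (c * n / (6 * ℓ))) := by gcongr
        _ = c * n / ℓ := by field_simp; norm_num
    exact_mod_cast h5
  · have h5 : ((h * (3 * q) : ℕ) : ℝ) ≤ n := by
      push_cast
      calc (h : ℝ) * (3 * q) ≤ (δ * ℓ) * (3 * (c * n / (6 * ℓ))) := by gcongr
        _ = δ * c * n / 2 := by field_simp; norm_num
        _ ≤ n := by nlinarith
    exact_mod_cast h5
  · have h52 : ((h * 26 ^ h : ℕ) : ℝ) ≤ w := by
      have h5 : h * 26 ^ h ≤ 52 ^ h := by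
        calc h * 26 ^ h ≤ 2 ^ h * 26 ^ h := by gcongr; exact Nat.lt_two_pow_self.le
          _ = 52 ^ h := by rw [← mul_pow]; norm_num
      have h6 : (52 : ℝ) ≤ Real.exp 4 := by
        have h7 := Real.exp_one_gt_d9
        calc (52 : ℝ) ≤ 2.7182818283 ^ 4 := by norm_num
          _ ≤ Real.exp 1 ^ 4 := by gcongr
          _ = Real.exp 4 := by rw [← Real.exp_nat_mul]; norm_num
      calc ((h * 26 ^ h : ℕ) : ℝ) ≤ (52 : ℝ) ^ h := by exact_mod_cast h5
        _ ≤ Real.exp 4 ^ h := by gcongr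
        _ = Real.exp (h * 4) := by rw [← Real.exp_nat_mul]
        _ ≤ Real.exp (ℓ / 2) := by
          apply Real.exp_le_exp.2
          nlinarith
        _ = w := hexp
    have h5 : ((2 * (r * (2 * (h * 26 ^ h))) : ℕ) : ℝ) ≤ ((h * (3 * q) : ℕ) : ℝ) := by
      refine le_trans ?_ hN
      have h6 : ((2 * (r * (2 * (h * 26 ^ h))) : ℕ) : ℝ) = 4 * r * ((h * 26 ^ h : ℕ) : ℝ) := by
        push_cast; ring
      rw [h6, ← hww]
      rw [div_le_iff₀ (by positivity)] at h4
      calc 4 * r * ((h * 26 ^ h : ℕ) : ℝ) ≤ 4 * r * w := by gcongr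
        _ = (32 * r) * w / 8 := by ring
        _ ≤ (w * (δ * c)) * w / 8 := by gcongr
        _ = _ := by ring
    exact_mod_cast h5

end

theorem stmt_3 (k : ℕ) (hk : 3 ≤ k) (c : ℝ) (hc : 0 < c) :
    ∃ η : ℝ, 0 < η ∧ ∃ n₀ : ℕ, ∀ n : ℕ, n₀ ≤ n →
      ∃ G : SimpleGraph (Fin n),
        ¬ HasIndMonPath G (2 * k - 1) ∧
        η * (n : ℝ) ^ (k ^ 2 / 4) ≤ (cliqueCount Gᶜ (k ^ 2 / 4) : ℝ) ∧
        ¬ ContainsBlowup Gᶜ 2 ⌈c * (n : ℝ) / Real.log n⌉₊ := by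
  generalize k ^ 2 / 4 = r
  obtain ⟨κ, hκ, n₀, hn₀⟩ := eventually_params c hc r
  refine ⟨(κ / 2) ^ r / r.factorial, by positivity, n₀, fun n hn => ?_⟩
  obtain ⟨q, h, hq, hqt, hhn, hκn, hΔ⟩ := hn₀ n hn
  obtain ⟨E, hE, hD, hX⟩ := exists_expander (3 * q)
  have : NeZero (3 * q) := ⟨by omega⟩
  let φ : Fin n ↪ ℕ × Fin (3 * q) := Fin.valEmbedding.trans (Nat.divModEquiv (3 * q)).toEmbedding
  have hφ : ∀ v : Fin n, (φ v).1 = v / (3 * q) := fun v => rfl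
  have hlt : ∀ {u v : Fin n}, LayerLT E (φ u) (φ v) → u < v := by
    intro u v huv
    have h1 := huv.fst_lt
    rw [hφ, hφ] at h1
    exact lt_of_not_ge fun hle => absurd (Nat.div_le_div_right (c := 3 * q) hle) (not_le.2 h1)
  let G : SimpleGraph (Fin n) :=
    { Adj := fun u v => LayerLT E (φ u) (φ v) ∨ LayerLT E (φ v) (φ u)
      symm := ⟨fun u v huv => huv.symm⟩
      loopless := ⟨fun u huv => (huv.elim hlt hlt).false⟩ }
  have hG : ∀ {u v : Fin n}, u < v → (G.Adj u v ↔ LayerLT E (φ u) (φ v)) := fun huv =>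
    ⟨fun hadj => hadj.elim id fun hvu => absurd (hlt hvu) huv.asymm, Or.inl⟩
  refine ⟨G, ?_, ?_, ?_⟩
  · rintro ⟨v, hv, hadj⟩
    have h01 : v ⟨0, by omega⟩ < v ⟨1, by omega⟩ := hv (by simp)
    have h12 : v ⟨1, by omega⟩ < v ⟨2, by omega⟩ := hv (by simp)
    have a01 := (hG h01).1 ((hadj _ _).2 (by simp))
    have a12 := (hG h12).1 ((hadj _ _).2 (by simp))
    have a02 := (hadj _ _).1 ((hG (h01.trans h12)).2 (a01.trans a12))
    simp at a02
  · let B : Finset (Fin n) := {v | (v : ℕ) < h * (3 * q)}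
    have hB : B.card = h * (3 * q) := by
      simp only [B]
      rw [Fin.card_filter_val_lt, min_eq_right hhn]
    have hcount := pow_le_factorial_mul_cliqueCount_compl G B (2 * (h * 26 ^ h)) r (by
      intro u hu S hS hSu
      have hlev : ∀ v ∈ B, (φ v).1 < h := fun v hv => by
        rw [hφ]
        exact Nat.div_lt_of_lt_mul ((Finset.mem_filter.1 hv).2.trans_eq (mul_comm _ _))
      rw [← Finset.card_map φ]
      refine card_comparable_le hE hD (by norm_num) h (φ u) _ (hlev u hu) fun x hx => ?_
      obtain ⟨v, hv, rfl⟩ := Finset.mem_map.1 hx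
      refine ⟨hlev v (hS hv), (hSu v hv).imp (congrArg φ) id⟩) (by rw [hB]; exact hΔ)
    rw [hB] at hcount
    rw [div_mul_eq_mul_div, div_le_iff₀ (by positivity), ← mul_pow,
      mul_comm (cliqueCount Gᶜ r : ℝ)]
    refine le_trans ?_ hcount
    refine pow_le_pow_left₀ (by positivity) ?_ r
    linarith
  · rintro ⟨A, hcard, hdisj, hadj⟩
    have hle : ∀ i, 2 * (3 * q) ≤ ((A i).map φ).card := fun i => by
      rw [Finset.card_map, hcard i]; exact hqt
    obtain ⟨a, ha, b, hb, hab⟩ := exists_layerLT_of_card hq (Fintype.card_fin _) hE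
      (fun X hXq => hX X (by omega)) _ _
      ((Finset.disjoint_map φ).2 (hdisj 0 1 (by simp))) (hle 0) (hle 1)
    obtain ⟨u, hu, rfl⟩ := Finset.mem_map.1 ha
    obtain ⟨v, hv, rfl⟩ := Finset.mem_map.1 hb
    exact ((SimpleGraph.compl_adj G u v).1 (hadj 0 1 (by simp) u hu v hv)).2 hab
end
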